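/- Let T be a deterministic two-way transducer with n states and no acceptance condition. Then there exists a reversible two-way transducer S with no acceptance condition and at most C·n^{4n+1} states (for some absolute constant C) such that ⟦S⟧ = ⟦T⟧ as partial functions from A^ω to B^ω. -/

import Mathlib

namespace Paper

/-! ## Two-way parity automata and transducers over infinite words.

An infinite word over an alphabet `A` is a function `ℕ → A`.
A configuration `⊢ u p v` with `w = u v` is encoded as a pair `(p, |u|) : Q × ℕ`.
The left end-marker `⊢` is encoded as `(none : Option A)`. -/

/-- A two-way automaton (without acceptance condition): states `Q` partitioned into forward
states (`fwd`) and backward states, an initial forward state, and a transition relation `Δ`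
over `Q × (A ∪ {⊢}) × Q` where transitions on the end-marker `⊢` (encoded `none`) go from
backward to forward states. -/
structure TwoWayAut (A : Type) where
  Q : Type
  finQ : Fintype Q
  fwd : Q → Prop
  init : Q
  init_fwd : fwd init
  Δ : Set (Q × Option A × Q)
  marker : ∀ p q, (p, (none : Option A), q) ∈ Δ → ¬ fwd p ∧ fwd q

attribute [instance] TwoWayAut.finQ

variable {A B : Type}

/-- `StepVia M w c t c'` : from configuration `c`, using transition `t`, the automaton `M`
reaches the successor configuration `c'` on input word `w`. -/
def StepVia (M : TwoWayAut A) (w : ℕ → A) (c : M.Q × ℕ)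
    (t : M.Q × Option A × M.Q) (c' : M.Q × ℕ) : Prop :=
  t ∈ M.Δ ∧ t.1 = c.1 ∧ t.2.2 = c'.1 ∧
    ((M.fwd c.1 ∧ t.2.1 = some (w c.2) ∧
        ((M.fwd c'.1 ∧ c'.2 = c.2 + 1) ∨ (¬ M.fwd c'.1 ∧ c'.2 = c.2))) ∨
     (¬ M.fwd c.1 ∧ 0 < c.2 ∧ t.2.1 = some (w (c.2 - 1)) ∧
        ((M.fwd c'.1 ∧ c'.2 = c.2) ∨ (¬ M.fwd c'.1 ∧ c'.2 = c.2 - 1))) ∨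
     (¬ M.fwd c.1 ∧ c.2 = 0 ∧ t.2.1 = none ∧ c'.2 = 0))

/-- The successor relation on configurations. -/
def Step (M : TwoWayAut A) (w : ℕ → A) (c c' : M.Q × ℕ) : Prop :=
  ∃ t, StepVia M w c t c'

/-- An infinite run of `M` on `w`, given by its configurations and the transitions taken. -/
def IsRun (M : TwoWayAut A) (w : ℕ → A) (cfg : ℕ → M.Q × ℕ)
    (tr : ℕ → M.Q × Option A × M.Q) : Prop :=
  cfg 0 = (M.init, 0) ∧ ∀ i, StepVia M w (cfg i) (tr i) (cfg (i + 1))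

/-- The run reads the whole word: the prefix lengths are unbounded. -/
def ReadsWhole (M : TwoWayAut A) (cfg : ℕ → M.Q × ℕ) : Prop :=
  ∀ n : ℕ, ∃ i, n ≤ (cfg i).2

/-- `t` occurs infinitely often in the sequence `tr`. -/
def InfOften {T : Type} (tr : ℕ → T) (t : T) : Prop :=
  ∀ n, ∃ i, n ≤ i ∧ tr i = t

def Deterministic (M : TwoWayAut A) : Prop :=
  ∀ p a q q', (p, a, q) ∈ M.Δ → (p, a, q') ∈ M.Δ → q = q'

def Codeterministic (M : TwoWayAut A) : Prop :=
  ∀ p p' a q, (p, a, q) ∈ M.Δ → (p', a, q) ∈ M.Δ → p = p'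

def Reversible (M : TwoWayAut A) : Prop :=
  Deterministic M ∧ Codeterministic M

def Oneway (M : TwoWayAut A) : Prop := ∀ q, M.fwd q

/-- A two-way parity automaton: a two-way automaton together with a finite family of
coloring functions (indexed by `CIdx`). -/
structure ParityAut (A : Type) extends TwoWayAut A where
  CIdx : Type
  finC : Fintype CIdx
  color : CIdx → (Q × Option A × Q) → ℕ

attribute [instance] ParityAut.finC

/-- The parity acceptance condition: for every coloring function, the minimal color of the
transitions taken infinitely often is even. -/
def ParityCond (M : ParityAut A) (tr : ℕ → M.Q × Option A × M.Q) : Prop :=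
  ∀ c : M.CIdx, Even (sInf {m : ℕ | ∃ t, InfOften tr t ∧ M.color c t = m})

/-- Acceptance of an infinite word by a two-way parity automaton. -/
def ParityAut.Accepts (M : ParityAut A) (w : ℕ → A) : Prop :=
  ∃ cfg tr, IsRun M.toTwoWayAut w cfg tr ∧ ReadsWhole M.toTwoWayAut cfg ∧ ParityCond M tr

/-- All colors of `M` (on its transitions) belong to `{0, …, ℓ-1}`. -/
def ColorsLt (M : ParityAut A) (ℓ : ℕ) : Prop :=
  ∀ (c : M.CIdx) t, t ∈ M.Δ → M.color c t < ℓ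

/-- `l` is a prefix of the infinite word `x`. -/
def IsPrefixOf {C : Type} (l : List C) (x : ℕ → C) : Prop :=
  ∀ (i : ℕ) (h : i < l.length), l.get ⟨i, h⟩ = x i

/-- Concatenation of the first `n` words of a sequence of finite words. -/
def prefixCat {C : Type} (f : ℕ → List C) : ℕ → List C
  | 0 => []
  | n + 1 => prefixCat f n ++ f n

/-- The concatenation of the sequence of finite words `f` is the infinite word `x`. -/
def FlattenTo {C : Type} (f : ℕ → List C) (x : ℕ → C) : Prop :=
  (∀ n, IsPrefixOf (prefixCat f n) x) ∧ ∀ m, ∃ n, m ≤ (prefixCat f n).length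

/-- A two-way parity transducer: a two-way parity automaton (whose underlying automaton is
required to be deterministic via hypotheses) together with an output function. -/
structure TwoWayTrans (A B : Type) extends ParityAut A where
  out : (Q × Option A × Q) → List B

/-- `T.Realizes w x` : the word `w` is accepted by (the deterministic transducer) `T`,
the produced output is infinite and equals `x`.  This is the graph of the partial function
`⟦T⟧ : A^ω ⇀ B^ω`. -/
def TwoWayTrans.Realizes (T : TwoWayTrans A B) (w : ℕ → A) (x : ℕ → B) : Prop :=
  ∃ cfg tr, IsRun T.toTwoWayAut w cfg tr ∧ ReadsWhole T.toTwoWayAut cfg ∧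
    ParityCond T.toParityAut tr ∧ FlattenTo (fun i => T.out (tr i)) x

/-- A two-way Büchi transducer: accepting transitions `acc` instead of coloring functions. -/
structure BuchiTrans (A B : Type) extends TwoWayAut A where
  acc : Set (Q × Option A × Q)
  out : (Q × Option A × Q) → List B

def BuchiTrans.Realizes (T : BuchiTrans A B) (w : ℕ → A) (x : ℕ → B) : Prop :=
  ∃ cfg tr, IsRun T.toTwoWayAut w cfg tr ∧ ReadsWhole T.toTwoWayAut cfg ∧
    (∀ n, ∃ i, n ≤ i ∧ tr i ∈ T.acc) ∧ FlattenTo (fun i => T.out (tr i)) x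

/-- A two-way transducer with no acceptance condition. -/
structure NoAccTrans (A B : Type) extends TwoWayAut A where
  out : (Q × Option A × Q) → List B

def NoAccTrans.Realizes (T : NoAccTrans A B) (w : ℕ → A) (x : ℕ → B) : Prop :=
  ∃ cfg tr, IsRun T.toTwoWayAut w cfg tr ∧ ReadsWhole T.toTwoWayAut cfg ∧
    FlattenTo (fun i => T.out (tr i)) x

/-! ## One-way parity automata, transducers, and copyless parity streaming string
transducers.  A one-way automaton has only forward states and never reads the end-marker,
so we use a simplified (equivalent) presentation. -/

structure OnewayAut (A : Type) where
  Q : Type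
  finQ : Fintype Q
  init : Q
  Δ : Set (Q × A × Q)
  CIdx : Type
  finC : Fintype CIdx
  color : CIdx → (Q × A × Q) → ℕ

attribute [instance] OnewayAut.finQ
attribute [instance] OnewayAut.finC

def OnewayDet (M : OnewayAut A) : Prop :=
  ∀ p a q q', (p, a, q) ∈ M.Δ → (p, a, q') ∈ M.Δ → q = q'

def OnewayRun (M : OnewayAut A) (w : ℕ → A) (s : ℕ → M.Q) : Prop :=
  s 0 = M.init ∧ ∀ i, (s i, w i, s (i + 1)) ∈ M.Δ

def OnewayParityCond (M : OnewayAut A) (tr : ℕ → M.Q × A × M.Q) : Prop :=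
  ∀ c : M.CIdx, Even (sInf {m : ℕ | ∃ t, InfOften tr t ∧ M.color c t = m})

def OnewayAut.Accepts (M : OnewayAut A) (w : ℕ → A) : Prop :=
  ∃ s, OnewayRun M w s ∧ OnewayParityCond M (fun i => (s i, w i, s (i + 1)))

def OnewayColorsLt (M : OnewayAut A) (ℓ : ℕ) : Prop :=
  ∀ (c : M.CIdx) t, t ∈ M.Δ → M.color c t < ℓ

/-- A one-way (deterministic) parity transducer. -/
structure OnewayTrans (A B : Type) extends OnewayAut A where
  out : (Q × A × Q) → List B

def OnewayTrans.Realizes (T : OnewayTrans A B) (w : ℕ → A) (x : ℕ → B) : Prop :=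
  ∃ s, OnewayRun T.toOnewayAut w s ∧
    OnewayParityCond T.toOnewayAut (fun i => (s i, w i, s (i + 1))) ∧
    FlattenTo (fun i => T.out (s i, w i, s (i + 1))) x

/-- Number of occurrences of `a` in the list `l` (classically). -/
noncomputable def occ {C : Type} (a : C) (l : List C) : ℕ :=
  l.countP fun x => @decide (x = a) (Classical.propDecidable _)

/-- A substitution `σ : R → (R ⊎ B)*` is copyless if every register occurs at most once in
the concatenation of all the `σ r'`. -/
def Copyless {R C : Type} [Fintype R] (σ : R → List (R ⊕ C)) : Prop :=
  ∀ r : R, (∑ r' : R, occ (Sum.inl r) (σ r')) ≤ 1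

/-- Applying an assignment `ν : R → B*` (extended to a morphism `(R ⊎ B)* → B*`). -/
def subApply {R C : Type} (ν : R → List C) : List (R ⊕ C) → List C
  | [] => []
  | Sum.inl r :: l => ν r ++ subApply ν l
  | Sum.inr b :: l => b :: subApply ν l

/-- A copyless parity streaming string transducer: a (deterministic) one-way parity
automaton with a finite set `R` of registers, a distinguished output register, and copyless
register updates, where the update of `outReg` always starts with `outReg`. -/
structure CPSST (A B : Type) extends OnewayAut A where
  R : Type
  finR : Fintype R
  outReg : R
  upd : (Q × A × Q) → R → List (R ⊕ B)
  copyless : ∀ t, @Copyless R B finR (upd t)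
  out_form : ∀ t, ∃ γ, upd t outReg = Sum.inl outReg :: γ

attribute [instance] CPSST.finR

/-- The register contents along a run: `ν_0 r = ε` and `ν_{i+1} = ν_i ∘ λ(t_i)`. -/
def regVal (T : CPSST A B) (w : ℕ → A) (s : ℕ → T.Q) : ℕ → T.R → List B
  | 0 => fun _ => []
  | i + 1 => fun r => subApply (regVal T w s i) (T.upd (s i, w i, s (i + 1)) r)

/-- `T.Realizes w x` : the (deterministic) CPSST `T` has an accepting run on `w` whose
output-register contents are unbounded with limit `x`. -/
def CPSST.Realizes (T : CPSST A B) (w : ℕ → A) (x : ℕ → B) : Prop :=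
  ∃ s, OnewayRun T.toOnewayAut w s ∧
    OnewayParityCond T.toOnewayAut (fun i => (s i, w i, s (i + 1))) ∧
    (∀ i, IsPrefixOf (regVal T w s i T.outReg) x) ∧
    (∀ m, ∃ i, m ≤ (regVal T w s i T.outReg).length)

/-- The one-way parity transducer with the same underlying automaton as the CPSST `T`,
which outputs on each transition the (copyless) substitution that `T` applies. -/
def enrich (T : CPSST A B) :
    OnewayTrans A {σ : T.R → List (T.R ⊕ B) // Copyless σ} where
  toOnewayAut := T.toOnewayAut
  out := fun t => [⟨T.upd t, T.copyless t⟩]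

/-! ## Merging forests -/

/-- A merging forest on `(Q⁺ ⊎ Q⁻, χ, ℓ)`: a finite rooted forest (given by a `parent` map
with no cycles) whose leaves (childless nodes) are injectively labeled in `Q⁻` and carry a
`χ`-tuple of integers `< ℓ`, whose roots are injectively labeled in `Q⁺`, and in which every
unary node (exactly one child) is a root. -/
structure MForest (Qp Qm χ : Type) (ℓ : ℕ) where
  V : Type
  finV : Fintype V
  parent : V → Option V
  acyc : ∀ v : V, ¬ Relation.TransGen (fun a b => parent a = some b) v v
  leafLab : V → Qm
  rootLab : V → Qp
  tup : V → χ → ℕ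
  tup_lt : ∀ v, (∀ u, parent u ≠ some v) → ∀ c, tup v c < ℓ
  leaf_inj : ∀ u v, (∀ u', parent u' ≠ some u) → (∀ v', parent v' ≠ some v) →
    leafLab u = leafLab v → u = v
  root_inj : ∀ u v, parent u = none → parent v = none → rootLab u = rootLab v → u = v
  unary_root : ∀ v : V, (∃! u, parent u = some v) → parent v = none

attribute [instance] MForest.finV

/-- Isomorphism of merging forests: a bijection of the nodes commuting with `parent` and
preserving the leaf labels, the leaf tuples and the root labels. -/
def MFIso {Qp Qm χ : Type} {ℓ : ℕ} (F G : MForest Qp Qm χ ℓ) : Prop :=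
  ∃ e : F.V ≃ G.V,
    (∀ v, G.parent (e v) = Option.map e (F.parent v)) ∧
    (∀ v, (∀ u, F.parent u ≠ some v) →
      F.leafLab v = G.leafLab (e v) ∧ ∀ c, F.tup v c = G.tup (e v) c) ∧
    (∀ v, F.parent v = none → F.rootLab v = G.rootLab (e v))

end Paper

namespace Paper

variable {A B : Type}

/-! ## Generic facts on finite runs with outputs -/

/-- One step of the transducer, with its output. -/
def CStep (M : NoAccTrans A B) (w : ℕ → A) (c : M.Q × ℕ) (o : List B) (c' : M.Q × ℕ) : Prop :=
  ∃ t, StepVia M.toTwoWayAut w c t c' ∧ M.out t = o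

/-- Finite runs, with their lengths and outputs. -/
inductive Run (M : NoAccTrans A B) (w : ℕ → A) : ℕ → M.Q × ℕ → List B → M.Q × ℕ → Prop
  | nil (c) : Run M w 0 c [] c
  | cons {k c o c' o' c''} : CStep M w c o c' → Run M w k c' o' c'' →
      Run M w (k + 1) c (o ++ o') c''

theorem Run.trans {M : NoAccTrans A B} {w : ℕ → A} {k l c o c' o' c''}
    (h : Run M w k c o c') (h' : Run M w l c' o' c'') : Run M w (k + l) c (o ++ o') c'' := by
  induction h with
  | nil c => simpa using h'
  | @cons k c o c1 o1 c2 hs _ ih =>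
    have := Run.cons hs (ih h')
    rw [List.append_assoc, show k + 1 + l = k + l + 1 by omega]
    exact this

theorem Run.single {M : NoAccTrans A B} {w : ℕ → A} {c o c'} (h : CStep M w c o c') :
    Run M w 1 c o c' := by
  have := Run.cons h (Run.nil c')
  simpa using this

theorem stepVia_det {M : TwoWayAut A} (hM : Deterministic M) {w : ℕ → A} {c t c' t' c''}
    (h : StepVia M w c t c') (h' : StepVia M w c t' c'') : t = t' ∧ c' = c'' := by
  obtain ⟨p, i⟩ := c
  obtain ⟨q, j⟩ := c'
  obtain ⟨q', j'⟩ := c''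
  obtain ⟨t1, a, t2⟩ := t
  obtain ⟨t1', a', t2'⟩ := t'
  simp only [StepVia] at h h'
  obtain ⟨h1, rfl, rfl, h2⟩ := h
  obtain ⟨h1', rfl, rfl, h2'⟩ := h'
  have ha : a = a' := by
    rcases h2 with h2 | h2 | h2 <;> rcases h2' with h2' | h2' | h2' <;>
      first
      | (exfalso; tauto)
      | (exfalso; omega)
      | (rw [h2.2.1, h2'.2.1])
      | (rw [h2.2.2.1, h2'.2.2.1])
  subst ha
  have hq := hM _ _ _ _ h1 h1'
  subst hq
  refine ⟨rfl, ?_⟩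
  congr 1
  rcases h2 with h2 | h2 | h2 <;> rcases h2' with h2' | h2' | h2'
  · rcases h2.2.2 with h3 | h3 <;> rcases h2'.2.2 with h3' | h3' <;>
      first | (exfalso; tauto) | omega
  · tauto
  · tauto
  · tauto
  · rcases h2.2.2.2 with h3 | h3 <;> rcases h2'.2.2.2 with h3' | h3' <;>
      first | (exfalso; tauto) | omega
  · omega
  · tauto
  · omega
  · omega

theorem cstep_det {M : NoAccTrans A B} (hM : Deterministic M.toTwoWayAut) {w : ℕ → A}
    {c o c' o' c''} (h : CStep M w c o c') (h' : CStep M w c o' c'') : o = o' ∧ c' = c'' := by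
  obtain ⟨t, h, rfl⟩ := h
  obtain ⟨t', h', rfl⟩ := h'
  obtain ⟨rfl, rfl⟩ := stepVia_det hM h h'
  exact ⟨rfl, rfl⟩

theorem run_det {M : NoAccTrans A B} (hM : Deterministic M.toTwoWayAut) {w : ℕ → A}
    {k c o c' o' c''} (h : Run M w k c o c') (h' : Run M w k c o' c'') : o = o' ∧ c' = c'' := by
  induction h generalizing o' with
  | nil c => cases h'; exact ⟨rfl, rfl⟩
  | cons hs _ ih =>
    cases h' with
    | cons hs' hr' =>
      obtain ⟨rfl, rfl⟩ := cstep_det hM hs hs'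
      obtain ⟨rfl, rfl⟩ := ih hr'
      exact ⟨rfl, rfl⟩

theorem run_split {M : NoAccTrans A B} {w : ℕ → A} (k : ℕ) {l c o c''}
    (h : Run M w (k + l) c o c'') :
    ∃ o1 c' o2, Run M w k c o1 c' ∧ Run M w l c' o2 c'' ∧ o = o1 ++ o2 := by
  induction k generalizing c o with
  | zero => exact ⟨[], c, o, Run.nil c, by simpa using h, rfl⟩
  | succ k ih =>
    rw [show k + 1 + l = (k + l) + 1 by omega] at h
    cases h with
    | cons hs hr =>
      obtain ⟨o1, c', o2, h1, h2, rfl⟩ := ih hr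
      exact ⟨_, c', o2, Run.cons hs h1, h2, by simp⟩

theorem isRun_run {M : NoAccTrans A B} {w : ℕ → A} {cfg tr}
    (h : IsRun M.toTwoWayAut w cfg tr) (k : ℕ) :
    Run M w k (M.init, 0) (prefixCat (fun i => M.out (tr i)) k) (cfg k) := by
  induction k with
  | zero => rw [h.1]; exact Run.nil _
  | succ k ih =>
    exact ih.trans (Run.single ⟨tr k, h.2 k, rfl⟩)

theorem prefixCat_mono {C : Type} (f : ℕ → List C) {k l : ℕ} (h : k ≤ l) :
    prefixCat f k <+: prefixCat f l := by
  induction h with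
  | refl => exact List.prefix_rfl
  | step _ ih => exact ih.trans (List.prefix_append _ _)

theorem isPrefixOf_mono {C : Type} {l l' : List C} {x : ℕ → C} (h : l <+: l')
    (h' : IsPrefixOf l' x) : IsPrefixOf l x := by
  obtain ⟨r, rfl⟩ := h
  intro i hi
  have := h' i (by simp; omega)
  rw [← this]
  simp [List.getElem_append, hi]

theorem flatten_sub {C : Type} {f u : ℕ → List C} {n : ℕ → ℕ} (hn : ∀ i, i ≤ n i)
    (h : ∀ i, prefixCat u i = prefixCat f (n i)) (x : ℕ → C) :
    FlattenTo f x ↔ FlattenTo u x := by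
  constructor
  · rintro ⟨h1, h2⟩
    refine ⟨fun i => h i ▸ h1 (n i), fun m => ?_⟩
    obtain ⟨k, hk⟩ := h2 m
    exact ⟨k, hk.trans (by rw [h]; exact (prefixCat_mono f (hn k)).length_le)⟩
  · rintro ⟨h1, h2⟩
    refine ⟨fun i => isPrefixOf_mono (prefixCat_mono f (hn i)) (h i ▸ h1 i), fun m => ?_⟩
    obtain ⟨k, hk⟩ := h2 m
    exact ⟨n k, by rw [← h]; exact hk⟩

/-- If a deterministic transducer runs through the checkpoints `K i` with outputs `u i`, then
its image is the concatenation of the `u i`. -/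
theorem checkpoint_realizes {M : NoAccTrans A B} (hM : Deterministic M.toTwoWayAut) {w : ℕ → A}
    {K : ℕ → M.Q × ℕ} {u : ℕ → List B} (h0 : K 0 = (M.init, 0))
    (hK : ∀ i, ∃ k, 1 ≤ k ∧ Run M w k (K i) (u i) (K (i + 1))) (hp : ∀ i, i ≤ (K i).2)
    (x : ℕ → B) : M.Realizes w x ↔ FlattenTo u x := by
  have hn : ∀ i, ∃ n, i ≤ n ∧ Run M w n (M.init, 0) (prefixCat u i) (K i) := by
    intro i
    induction i with
    | zero => exact ⟨0, le_rfl, by rw [h0]; exact Run.nil _⟩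
    | succ i ih =>
      obtain ⟨n, hn, hr⟩ := ih
      obtain ⟨k, hk, hr'⟩ := hK i
      exact ⟨n + k, by omega, hr.trans hr'⟩
  choose n hn hr using hn
  have key : ∀ cfg tr, IsRun M.toTwoWayAut w cfg tr →
      (FlattenTo (fun i => M.out (tr i)) x ↔ FlattenTo u x) := by
    intro cfg tr hrun
    exact flatten_sub hn (fun i => (run_det hM (hr i) (isRun_run hrun (n i))).1) x
  constructor
  · rintro ⟨cfg, tr, hrun, -, hf⟩
    exact (key cfg tr hrun).1 hf
  · intro hf
    have hex : ∀ k, ∃ o c, Run M w k (M.init, 0) o c := by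
      intro k
      have := hr k
      obtain ⟨d, hd⟩ := Nat.exists_eq_add_of_le (hn k)
      rw [hd] at this
      obtain ⟨o1, c', -, h1, -, -⟩ := run_split k this
      exact ⟨o1, c', h1⟩
    choose o cfg hcfg using hex
    have hst : ∀ k, ∃ t, StepVia M.toTwoWayAut w (cfg k) t (cfg (k + 1)) := by
      intro k
      obtain ⟨o1, c', o2, h1, h2, -⟩ := run_split k (hcfg (k + 1))
      obtain ⟨-, rfl⟩ := run_det hM h1 (hcfg k)
      cases h2 with
      | cons hs hr0 =>
        cases hr0
        exact ⟨hs.choose, hs.choose_spec.1⟩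
    choose tr htr using hst
    have hrun : IsRun M.toTwoWayAut w cfg tr := by
      refine ⟨?_, htr⟩
      have := hcfg 0
      generalize cfg 0 = c at this
      generalize o 0 = o' at this
      cases this
      rfl
    refine ⟨cfg, tr, hrun, fun m => ⟨n m, ?_⟩, (key cfg tr hrun).2 hf⟩
    obtain ⟨-, h⟩ := run_det hM (hr m) (hcfg (n m))
    rw [← h]
    exact hp m

theorem stuck_not_realizes {M : NoAccTrans A B} (hM : Deterministic M.toTwoWayAut) {w : ℕ → A}
    {k o c} (h : Run M w k (M.init, 0) o c) (hc : ∀ o' c', ¬ CStep M w c o' c')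
    (x : ℕ → B) : ¬ M.Realizes w x := by
  rintro ⟨cfg, tr, hrun, -, -⟩
  obtain ⟨-, rfl⟩ := run_det hM h (isRun_run hrun k)
  exact hc _ _ ⟨tr k, hrun.2 k, rfl⟩

/-! ## Excursions of a two-way transducer -/

/-- `Walk T a X k p o s`: starting in the state `p` reading the letter `a`, with `X` describing
the excursions to the left of this letter, `T` finally leaves the letter to the right in the
forward state `s` with output `o`. -/
inductive Walk (T : NoAccTrans A B) (a : A) (X : T.Q → List B → T.Q → Prop) :
    ℕ → T.Q → List B → T.Q → Prop
  | exit {p s} : (p, some a, s) ∈ T.Δ → T.fwd s → Walk T a X 0 p (T.out (p, some a, s)) s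
  | step {p r o1 s1 k o2 s} : (p, some a, r) ∈ T.Δ → ¬ T.fwd r → X r o1 s1 →
      Walk T a X k s1 o2 s → Walk T a X (k + 1) p (T.out (p, some a, r) ++ (o1 ++ o2)) s

/-- Excursions into the prefix of length `i`. -/
def Exc (T : NoAccTrans A B) (w : ℕ → A) : ℕ → T.Q → List B → T.Q → Prop
  | 0 => fun r o s => (r, none, s) ∈ T.Δ ∧ o = T.out (r, none, s)
  | i + 1 => fun r o s => ∃ k, Walk T (w i) (Exc T w i) k r o s

theorem Walk.fwd_end {T : NoAccTrans A B} {a X k p o s} (h : Walk T a X k p o s) : T.fwd s := by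
  induction h with
  | exit _ h => exact h
  | step _ _ _ _ ih => exact ih

theorem Exc.fwd_end {T : NoAccTrans A B} {w : ℕ → A} {i r o s} (h : Exc T w i r o s) :
    T.fwd s := by
  cases i with
  | zero => exact (T.marker _ _ h.1).2
  | succ i => obtain ⟨k, h⟩ := h; exact h.fwd_end

theorem Walk.det {T : NoAccTrans A B} (hT : Deterministic T.toTwoWayAut) {a X}
    (hX : ∀ r o s o' s', X r o s → X r o' s' → s = s') {k p o s k' o' s'}
    (h : Walk T a X k p o s) (h' : Walk T a X k' p o' s') : s = s' := by
  induction h generalizing k' o' with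
  | exit h1 h2 =>
    cases h' with
    | exit h1' h2' => exact hT _ _ _ _ h1 h1'
    | step h1' h2' => cases hT _ _ _ _ h1 h1'; exact absurd h2 h2'
  | step h1 h2 hx _ ih =>
    cases h' with
    | exit h1' h2' => cases hT _ _ _ _ h1 h1'; exact absurd h2' h2
    | step h1' h2' hx' hw' =>
      cases hT _ _ _ _ h1 h1'
      cases hX _ _ _ _ _ hx hx'
      exact ih hw'

theorem Exc.det {T : NoAccTrans A B} (hT : Deterministic T.toTwoWayAut) (w : ℕ → A) (i : ℕ) :
    ∀ r o s o' s', Exc T w i r o s → Exc T w i r o' s' → s = s' := by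
  induction i with
  | zero => intro r o s o' s' h h'; exact hT _ _ _ _ h.1 h'.1
  | succ i ih =>
    rintro r o s o' s' ⟨k, h⟩ ⟨k', h'⟩
    exact h.det hT ih h'

open Classical in
/-- Position of the head when the state `p` is about to read the letter number `i`. -/
noncomputable def cellPos (T : NoAccTrans A B) (p : T.Q) (i : ℕ) : ℕ := if T.fwd p then i else i + 1

open Classical in
theorem cell_step {T : NoAccTrans A B} {w : ℕ → A} {p q i} (h : (p, some (w i), q) ∈ T.Δ) :
    CStep T w (p, cellPos T p i) (T.out (p, some (w i), q))
      (q, if T.fwd q then i + 1 else i) := by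
  refine ⟨(p, some (w i), q), ⟨h, rfl, rfl, ?_⟩, rfl⟩
  by_cases hp : T.fwd p <;> by_cases hq : T.fwd q <;> simp [cellPos, hp, hq]

theorem Walk.run {T : NoAccTrans A B} {w : ℕ → A} {i : ℕ}
    (hX : ∀ r o s, ¬ T.fwd r → Exc T w i r o s → ∃ k, Run T w k (r, i) o (s, i)) {k p o s}
    (h : Walk T (w i) (Exc T w i) k p o s) :
    ∃ k, 1 ≤ k ∧ Run T w k (p, cellPos T p i) o (s, i + 1) := by
  induction h with
  | exit h1 h2 =>
    have := cell_step (w := w) h1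
    rw [if_pos h2] at this
    exact ⟨1, le_rfl, Run.single this⟩
  | step h1 h2 hx hw ih =>
    have h3 := cell_step (w := w) h1
    rw [if_neg h2] at h3
    obtain ⟨k1, hr1⟩ := hX _ _ _ h2 hx
    obtain ⟨k2, _, hr2⟩ := ih
    have : cellPos T _ i = i := if_pos hx.fwd_end
    rw [this] at hr2
    exact ⟨_, by omega, Run.cons h3 (hr1.trans hr2)⟩

theorem Exc.run {T : NoAccTrans A B} {w : ℕ → A} (i : ℕ) :
    ∀ r o s, ¬ T.fwd r → Exc T w i r o s → ∃ k, Run T w k (r, i) o (s, i) := by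
  induction i with
  | zero =>
    rintro r o s hr ⟨h, rfl⟩
    exact ⟨1, Run.single ⟨_, ⟨h, rfl, rfl, by simp [hr]⟩, rfl⟩⟩
  | succ i ih =>
    rintro r o s hr ⟨k, h⟩
    obtain ⟨k, -, h⟩ := h.run ih
    rw [show cellPos T r i = i + 1 from if_neg hr] at h
    exact ⟨k, h⟩

theorem cstep_cell {T : NoAccTrans A B} {w : ℕ → A} {p i o c}
    (h : CStep T w (p, cellPos T p i) o c) :
    (p, some (w i), c.1) ∈ T.Δ ∧ o = T.out (p, some (w i), c.1) ∧
      ((T.fwd c.1 ∧ c.2 = i + 1) ∨ (¬ T.fwd c.1 ∧ c.2 = i)) := by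
  obtain ⟨⟨t1, a, t2⟩, ⟨h1, h2, h3, h4⟩, rfl⟩ := h
  simp only at h2 h3
  subst h2 h3
  by_cases hp : T.fwd t1 <;> simp [cellPos, hp] at h4 <;> obtain ⟨rfl, h4⟩ := h4 <;>
    exact ⟨h1, rfl, h4⟩

theorem walk_complete {T : NoAccTrans A B} {w : ℕ → A} {i : ℕ}
    (hE : ∀ k r o c, ¬ T.fwd r → Run T w k (r, i) o c → i < c.2 →
      ∃ k' o1 s o2, k' ≤ k ∧ 1 ≤ k' ∧ Exc T w i r o1 s ∧ Run T w (k - k') (s, i) o2 c)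
    (k : ℕ) : ∀ p o c, Run T w k (p, cellPos T p i) o c → i + 1 < c.2 →
      ∃ k' o1 s o2 m, k' ≤ k ∧ 1 ≤ k' ∧ Walk T (w i) (Exc T w i) m p o1 s ∧
        Run T w (k - k') (s, i + 1) o2 c := by
  induction k using Nat.strong_induction_on with
  | _ k ih =>
    intro p o c h hc
    cases h with
    | nil =>
      exfalso
      simp only [cellPos] at hc
      split at hc <;> omega
    | @cons k _ o c' o' _ hs hr =>
      obtain ⟨h1, -, h3⟩ := cstep_cell hs
      obtain ⟨q, j⟩ := c'
      rcases h3 with ⟨h3, h4⟩ | ⟨h3, h4⟩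
      · simp only at h3 h4 h1
        subst h4
        exact ⟨1, _, q, o', 0, by omega, le_rfl, Walk.exit h1 h3, hr⟩
      · simp only at h3 h4 h1
        subst h4
        obtain ⟨k1, o1, s1, o2, hk1, hk1', hx, hr1⟩ := hE _ _ _ _ h3 hr (by omega)
        have : (s1, j) = (s1, cellPos T s1 j) := by rw [cellPos, if_pos hx.fwd_end]
        rw [this] at hr1
        obtain ⟨k2, o3, s, o4, m, hk2, hk2', hw, hr2⟩ := ih _ (by omega) _ _ _ hr1 hc
        refine ⟨1 + k1 + k2, _, s, o4, m + 1, by omega, by omega, Walk.step h1 h3 hx hw, ?_⟩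
        rw [show k + 1 - (1 + k1 + k2) = k - k1 - k2 by omega]
        exact hr2

theorem exc_complete {T : NoAccTrans A B} {w : ℕ → A} (i : ℕ) :
    ∀ k r o c, ¬ T.fwd r → Run T w k (r, i) o c → i < c.2 →
      ∃ k' o1 s o2, k' ≤ k ∧ 1 ≤ k' ∧ Exc T w i r o1 s ∧ Run T w (k - k') (s, i) o2 c := by
  induction i with
  | zero =>
    intro k r o c hr h hc
    cases h with
    | nil => simp at hc
    | @cons k _ o c' o' _ hs hrun =>
      obtain ⟨⟨t1, a, t2⟩, ⟨h1, h2, h3, h4⟩, rfl⟩ := hs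
      obtain ⟨q, j⟩ := c'
      simp only at h2 h3
      subst h2 h3
      simp [hr] at h4
      obtain ⟨rfl, rfl⟩ := h4
      exact ⟨1, _, t2, o', by omega, le_rfl, ⟨h1, rfl⟩, hrun⟩
  | succ i ih =>
    intro k r o c hr h hc
    rw [show (r, i + 1) = (r, cellPos T r i) by rw [cellPos, if_neg hr]] at h
    obtain ⟨k', o1, s, o2, m, h1, h2, h3, h4⟩ := walk_complete ih k r o c h hc
    exact ⟨k', o1, s, o2, h1, h2, ⟨m, h3⟩, h4⟩

/-- If `T` reads the whole word, then it leaves every prefix it has reached. -/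
theorem realizes_walk {T : NoAccTrans A B} (hT : Deterministic T.toTwoWayAut) {w : ℕ → A}
    {x : ℕ → B} (h : T.Realizes w x) {k o q i} (hq : T.fwd q)
    (hr : Run T w k (T.init, 0) o (q, i)) :
    ∃ m o s, Walk T (w i) (Exc T w i) m q o s := by
  obtain ⟨cfg, tr, hrun, hread, -⟩ := h
  obtain ⟨m, hm⟩ : ∃ m, i + 1 < (cfg (k + m)).2 := by
    by_contra hcon
    push Not at hcon
    obtain ⟨N, hN⟩ : ∃ N, ∀ t ≤ k, (cfg t).2 ≤ N := by
      refine ⟨∑ t ∈ Finset.range (k + 1), (cfg t).2, fun t ht => ?_⟩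
      exact Finset.single_le_sum (f := fun t => (cfg t).2) (fun _ _ => Nat.zero_le _)
        (Finset.mem_range.2 (by omega))
    obtain ⟨t, ht⟩ := hread (N + i + 2)
    rcases le_total t k with h | h
    · have := hN t h; omega
    · obtain ⟨m, rfl⟩ := Nat.exists_eq_add_of_le h
      have := hcon m; omega
  obtain ⟨o1, c', o2, h1, h2, -⟩ := run_split k (isRun_run hrun (k + m))
  obtain ⟨-, rfl⟩ := run_det hT hr h1
  rw [show (q, i) = (q, cellPos T q i) by rw [cellPos, if_pos hq]] at h2
  obtain ⟨_, o1, s, _, m, _, _, hw, _⟩ := walk_complete (exc_complete i) m _ _ _ h2 hm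
  exact ⟨m, o1, s, hw⟩

end Paper

namespace Paper

/-! ## Compression of functional graphs into small forests -/

/-- `Seg g x l t`: following the partial function `g` from `x`, one visits the nodes in `l`
and then arrives at the target `t` (a node or an exit). -/
inductive Seg {N X : Type} (g : N → Option (N ⊕ X)) : N → List N → N ⊕ X → Prop
  | nil (x) : Seg g x [] (Sum.inl x)
  | exit {x s} : g x = some (Sum.inr s) → Seg g x [x] (Sum.inr s)
  | cons {x y l t} : g x = some (Sum.inl y) → Seg g y l t → Seg g x (x :: l) t

theorem Seg.append {N X : Type} {g : N → Option (N ⊕ X)} {x y l l' t}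
    (h : Seg g x l (Sum.inl y)) (h' : Seg g y l' t) : Seg g x (l ++ l') t := by
  generalize ht : (Sum.inl y : N ⊕ X) = t0 at h
  induction h with
  | nil x => cases ht; exact h'
  | exit h1 => cases ht
  | cons h1 _ ih => exact Seg.cons h1 (ih ht)

theorem Seg.split {N X : Type} {g : N → Option (N ⊕ X)} {x y l1 l2 t}
    (h : Seg g x (l1 ++ y :: l2) t) : Seg g x l1 (Sum.inl y) ∧ Seg g y (y :: l2) t := by
  induction l1 generalizing x with
  | nil =>
    cases h with
    | exit h => exact ⟨Seg.nil _, Seg.exit h⟩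
    | cons h h' => exact ⟨Seg.nil _, Seg.cons h h'⟩
  | cons z l1 ih =>
    generalize hl : z :: l1 ++ y :: l2 = l at h
    cases h with
    | nil => simp at hl
    | exit h => simp at hl
    | cons h h' =>
      simp only [List.cons_append, List.cons.injEq] at hl
      obtain ⟨rfl, rfl⟩ := hl
      obtain ⟨h1, h2⟩ := ih h'
      exact ⟨Seg.cons h h1, h2⟩

theorem Seg.det {N X : Type} {g : N → Option (N ⊕ X)} {x l s l' s'}
    (h : Seg g x l (Sum.inr s)) (h' : Seg g x l' (Sum.inr s')) : l = l' ∧ s = s' := by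
  generalize ht : (Sum.inr s : N ⊕ X) = t0 at h
  induction h generalizing l' with
  | nil x => cases ht
  | exit h1 =>
    cases ht
    cases h' with
    | exit h2 => rw [h1] at h2; cases h2; exact ⟨rfl, rfl⟩
    | cons h2 _ => rw [h1] at h2; cases h2
  | cons h1 _ ih =>
    cases h' with
    | exit h2 => rw [h1] at h2; cases h2
    | cons h2 h3 =>
      rw [h1] at h2; cases h2
      obtain ⟨rfl, rfl⟩ := ih h3 ht
      exact ⟨rfl, rfl⟩

theorem Seg.nodup {N X : Type} {g : N → Option (N ⊕ X)} {x l s}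
    (h : Seg g x l (Sum.inr s)) : l.Nodup := by
  generalize ht : (Sum.inr s : N ⊕ X) = t0 at h
  induction h with
  | nil x => cases ht
  | exit h1 => simp
  | @cons x y l t h1 h2 ih =>
    subst ht
    refine List.nodup_cons.2 ⟨fun hx => ?_, ih rfl⟩
    obtain ⟨l1, l2, rfl⟩ := List.append_of_mem hx
    have h3 := (h2.split).2
    have h4 := ((Seg.cons h1 h2).det h3).1
    have := congrArg List.length h4
    simp at this
    omega

theorem Seg.head {N X : Type} {g : N → Option (N ⊕ X)} {x l s}
    (h : Seg g x l (Sum.inr s)) : ∃ l', l = x :: l' := by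
  cases h with
  | exit h => exact ⟨_, rfl⟩
  | cons h h' => exact ⟨_, rfl⟩

/-- The graph of a forest with nodes `(ℓ, false)` (leaves) and `(ℓ, true)` (inner nodes). -/
def fg {L X : Type} (φ : L × Bool → Option (L ⊕ X)) (e : L × Bool) :
    Option ((L × Bool) ⊕ X) :=
  (φ e).map (Sum.map (fun m => (m, true)) id)

structure CInv {N X L : Type} (g : N → Option (N ⊕ X)) (ι : L → N) (keep : X → Prop)
    (ls : Finset L) (φ : L × Bool → Option (L ⊕ X)) (σ : L × Bool → List N)
    (st : L × Bool → N) : Prop where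
  h0 : ∀ ℓ, st (ℓ, false) = ι ℓ
  coh : ∀ e t, fg φ e = some t → Seg g (st e) (σ e) (Sum.map st id t)
  act : ∀ ℓ b, φ (ℓ, b) ≠ none → ℓ ∈ ls
  ina : ∀ e, φ e = none → σ e = []
  kp : ∀ e, φ e ≠ none → ∃ l s, keep s ∧ Seg (fg φ) e l (Sum.inr s)
  nd : ∀ e, (σ e).Nodup
  dj : ∀ e e' y, y ∈ σ e → y ∈ σ e' → e = e'
  cm : ∀ ℓ ∈ ls, ∀ l s, keep s → Seg g (ι ℓ) l (Sum.inr s) → φ (ℓ, false) ≠ none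

theorem fg_ne {L X : Type} {φ : L × Bool → Option (L ⊕ X)} {e t} (h : fg φ e = some t) :
    φ e ≠ none := by
  intro h'; simp [fg, h'] at h

theorem seg_fg_ne {L X : Type} {φ : L × Bool → Option (L ⊕ X)} {e l s}
    (h : Seg (fg φ) e l (Sum.inr s)) : φ e ≠ none := by
  cases h with
  | exit h => exact fg_ne h
  | cons h _ => exact fg_ne h

theorem CInv.tgt {N X L : Type} {g : N → Option (N ⊕ X)} {ι : L → N} {keep : X → Prop}
    {ls φ σ st} (H : CInv g ι keep ls φ σ st) {e e'} (h : fg φ e = some (Sum.inl e')) :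
    φ e' ≠ none := by
  obtain ⟨l, s, -, hl⟩ := H.kp e (fg_ne h)
  cases hl with
  | exit h1 => rw [h] at h1; cases h1
  | cons h1 h2 => rw [h] at h1; cases h1; exact seg_fg_ne h2

theorem CInv.flat {N X L : Type} {g : N → Option (N ⊕ X)} {ι : L → N} {keep : X → Prop}
    {ls φ σ st} (H : CInv g ι keep ls φ σ st) {e l s} (h : Seg (fg φ) e l (Sum.inr s)) :
    Seg g (st e) (l.flatMap σ) (Sum.inr s) := by
  generalize ht : (Sum.inr s : _ ⊕ X) = t0 at h
  induction h with
  | nil x => cases ht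
  | exit h1 =>
    cases ht
    simpa using H.coh _ _ h1
  | cons h1 _ ih =>
    have := H.coh _ _ h1
    exact this.append (ih ht)

theorem first_used {N : Type} (P : N → Prop) (l : List N) :
    (∀ y ∈ l, ¬ P y) ∨ ∃ l1 y l2, l = l1 ++ y :: l2 ∧ P y ∧ ∀ z ∈ l1, ¬ P z := by
  induction l with
  | nil => left; simp
  | cons x l ih =>
    by_cases hx : P x
    · exact Or.inr ⟨[], x, l, rfl, hx, by simp⟩
    · rcases ih with h | ⟨l1, y, l2, rfl, h1, h2⟩
      · left; simpa [hx] using h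
      · exact Or.inr ⟨x :: l1, y, l2, rfl, h1, by simpa [hx] using h2⟩

open Classical in
theorem CInv.insert_leaf {N X L : Type} {g : N → Option (N ⊕ X)} {ι : L → N} {keep : X → Prop}
    {ls φ σ st} (H : CInv g ι keep ls φ σ st) {ℓ : L} (hℓ : ℓ ∉ ls) :
    ∃ φ' σ' st', CInv g ι keep (insert ℓ ls) φ' σ' st' := by
  have hn : ∀ b, φ (ℓ, b) = none := fun b => by
    by_contra h; exact hℓ (H.act _ _ h)
  have hs : ∀ b, σ (ℓ, b) = [] := fun b => H.ina _ (hn b)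
  by_cases hk : ∃ l s, keep s ∧ Seg g (ι ℓ) l (Sum.inr s)
  swap
  · refine ⟨φ, σ, st, { H with act := ?_, cm := ?_ }⟩
    · intro m b h; exact Finset.mem_insert_of_mem (H.act m b h)
    · intro m hm l s h1 h2
      rcases Finset.mem_insert.1 hm with rfl | hm
      · exact absurd ⟨l, s, h1, h2⟩ hk
      · exact H.cm m hm l s h1 h2
  obtain ⟨l, s, hks, hl⟩ := hk
  rcases first_used (fun y => ∃ e, y ∈ σ e) l with hu | ⟨l1, y, l2, rfl, ⟨e, hy⟩, hu⟩
  · -- a new tree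
    have hfg : ∀ e, e ≠ (ℓ, false) →
        fg (Function.update φ (ℓ, false) (some (Sum.inr s))) e = fg φ e := by
      intro e he
      simp [fg, Function.update_of_ne he]
    have hfg' : fg (Function.update φ (ℓ, false) (some (Sum.inr s))) (ℓ, false) =
        some (Sum.inr s) := by simp [fg]
    refine ⟨Function.update φ (ℓ, false) (some (Sum.inr s)),
      Function.update σ (ℓ, false) l, st, ?_⟩
    have tr : ∀ e l s', Seg (fg φ) e l (Sum.inr s') →
        Seg (fg (Function.update φ (ℓ, false) (some (Sum.inr s)))) e l (Sum.inr s') := by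
      intro e l s' h
      generalize ht : (Sum.inr s' : _ ⊕ X) = t0 at h
      induction h with
      | nil x => cases ht
      | @exit x s' h1 =>
        exact Seg.exit (by rw [hfg x (by rintro rfl; exact fg_ne h1 (hn _)), h1])
      | @cons x y l t h1 _ ih =>
        exact Seg.cons (by rw [hfg x (by rintro rfl; exact fg_ne h1 (hn _)), h1]) (ih ht)
    constructor
    · exact H.h0
    · intro e t he
      by_cases h : e = (ℓ, false)
      · subst h
        rw [hfg'] at he
        cases he
        simpa [H.h0] using hl
      · rw [hfg e h] at he
        rw [Function.update_of_ne h]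
        exact H.coh e t he
    · intro m b h
      by_cases hm : m = ℓ
      · simp [hm]
      · rw [Function.update_of_ne (by simp [hm])] at h
        exact Finset.mem_insert_of_mem (H.act m b h)
    · intro e he
      by_cases h : e = (ℓ, false)
      · subst h; simp at he
      · rw [Function.update_of_ne h] at he ⊢
        exact H.ina e he
    · intro e he
      by_cases h : e = (ℓ, false)
      · subst h
        exact ⟨_, s, hks, Seg.exit hfg'⟩
      · rw [Function.update_of_ne h] at he
        obtain ⟨l, s', h1, h2⟩ := H.kp e he
        exact ⟨l, s', h1, tr _ _ _ h2⟩
    · intro e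
      by_cases h : e = (ℓ, false)
      · subst h; simpa using hl.nodup
      · rw [Function.update_of_ne h]; exact H.nd e
    · intro e e' z h1 h2
      by_cases h : e = (ℓ, false) <;> by_cases h' : e' = (ℓ, false)
      · rw [h, h']
      · subst h
        rw [Function.update_self] at h1
        rw [Function.update_of_ne h'] at h2
        exact absurd ⟨_, h2⟩ (hu z h1)
      · subst h'
        rw [Function.update_self] at h2
        rw [Function.update_of_ne h] at h1
        exact absurd ⟨_, h1⟩ (hu z h2)
      · rw [Function.update_of_ne h] at h1
        rw [Function.update_of_ne h'] at h2
        exact H.dj _ _ _ h1 h2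
    · intro m hm l s h1 h2
      by_cases h : m = ℓ
      · subst h; simp
      · rw [Function.update_of_ne (by simp [h])]
        exact H.cm m ((Finset.mem_insert.1 hm).resolve_left h) l s h1 h2
  · -- a branching on the edge `e`
    obtain ⟨u, v, hσ⟩ := List.append_of_mem hy
    have hφe : φ e ≠ none := by
      intro h; rw [H.ina e h] at hy; cases hy
    obtain ⟨t0, ht0⟩ := Option.ne_none_iff_exists'.1 hφe
    have heℓ : e.1 ≠ ℓ := by
      intro h; apply hφe; rw [← hn e.2, ← h]
    have he1 : ∀ b, e ≠ (ℓ, b) := fun b h => heℓ (by rw [h])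
    have he2 : ∀ b, (ℓ, b) ≠ e := fun b h => heℓ (by rw [← h])
    let φ' : L × Bool → Option (L ⊕ X) := fun e' =>
      if e' = e then some (Sum.inl ℓ) else if e' = (ℓ, false) then some (Sum.inl ℓ)
      else if e' = (ℓ, true) then some t0 else φ e'
    let σ' : L × Bool → List N := fun e' =>
      if e' = e then u else if e' = (ℓ, false) then l1
      else if e' = (ℓ, true) then y :: v else σ e'
    let st' : L × Bool → N := fun e' => if e' = (ℓ, true) then y else st e'
    have p1 : φ' e = some (Sum.inl ℓ) := by simp [φ']
    have p2 : φ' (ℓ, false) = some (Sum.inl ℓ) := by simp [φ']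
    have p3 : φ' (ℓ, true) = φ e := by simp [φ', he2, ht0]
    have p4 : ∀ e', e' ≠ e → e' ≠ (ℓ, false) → e' ≠ (ℓ, true) → φ' e' = φ e' := by
      intro e' h1 h2 h3; simp [φ', h1, h2, h3]
    have q1 : σ' e = u := by simp [σ']
    have q2 : σ' (ℓ, false) = l1 := by simp [σ', he2]
    have q3 : σ' (ℓ, true) = y :: v := by simp [σ', he2]
    have q4 : ∀ e', e' ≠ e → e' ≠ (ℓ, false) → e' ≠ (ℓ, true) → σ' e' = σ e' := by
      intro e' h1 h2 h3; simp [σ', h1, h2, h3]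
    have s1 : st' (ℓ, true) = y := by simp [st']
    have s2 : ∀ e', e' ≠ (ℓ, true) → st' e' = st e' := by intro e' h; simp [st', h]
    have act' : ∀ e', φ e' ≠ none → ∀ b, e' ≠ (ℓ, b) := by
      rintro e' h b rfl; exact h (hn b)
    have tgt' : ∀ e' t, fg φ e' = some t → Sum.map st' id t = Sum.map st id t := by
      intro e' t h
      rcases t with e'' | s
      · simp [s2 e'' (act' _ (H.tgt h) _)]
      · rfl
    have f1 : fg φ' e = some (Sum.inl (ℓ, true)) := by simp [fg, p1]
    have f2 : fg φ' (ℓ, false) = some (Sum.inl (ℓ, true)) := by simp [fg, p2]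
    have f3 : fg φ' (ℓ, true) = fg φ e := by simp [fg, p3]
    have f4 : ∀ e', e' ≠ e → φ e' ≠ none → fg φ' e' = fg φ e' := by
      intro e' h1 h2; simp [fg, p4 e' h1 (act' _ h2 _) (act' _ h2 _)]
    have tr : ∀ e l s, Seg (fg φ) e l (Sum.inr s) →
        ∃ l', Seg (fg φ') e l' (Sum.inr s) := by
      intro e0 l s h
      generalize ht : (Sum.inr s : _ ⊕ X) = t0 at h
      induction h with
      | nil x => cases ht
      | @exit x s' h1 =>
        by_cases h : x = e
        · subst h
          exact ⟨_, Seg.cons f1 (Seg.exit (f3.trans h1))⟩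
        · exact ⟨_, Seg.exit ((f4 x h (fg_ne h1)).trans h1)⟩
      | @cons x y l t h1 _ ih =>
        obtain ⟨l', hl'⟩ := ih ht
        by_cases h : x = e
        · subst h
          exact ⟨_, Seg.cons f1 (Seg.cons (f3.trans h1) hl')⟩
        · exact ⟨_, Seg.cons ((f4 x h (fg_ne h1)).trans h1) hl'⟩
    have hcase : ∀ e', e' = e ∨ e' = (ℓ, false) ∨ e' = (ℓ, true) ∨
        (e' ≠ e ∧ e' ≠ (ℓ, false) ∧ e' ≠ (ℓ, true)) := by intro e'; tauto
    obtain ⟨te, hte⟩ := Option.ne_none_iff_exists'.1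
      (show fg φ e ≠ none by simpa [fg] using hφe)
    have hseg := H.coh e te hte
    rw [hσ] at hseg
    obtain ⟨hg1, hg2⟩ := hseg.split
    have hnd := H.nd e
    rw [hσ] at hnd
    have hmem : ∀ z, z ∈ u ∨ z ∈ y :: v ↔ z ∈ σ e := by intro z; rw [hσ]; simp
    have hdis : ∀ z, z ∈ u → z ∈ y :: v → False := by
      intro z h1 h2
      exact (List.nodup_append.1 hnd).2.2 z h1 z h2 rfl
    refine ⟨φ', σ', st', ?_⟩
    constructor
    · intro m; rw [s2 _ (by simp)]; exact H.h0 m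
    · intro e' t he'
      rcases hcase e' with rfl | rfl | rfl | ⟨h1, h2, h3⟩
      · rw [f1] at he'
        cases he'
        rw [s2 _ (he1 _), q1]
        simpa [s1] using hg1
      · rw [f2] at he'
        cases he'
        rw [s2 _ (by simp), q2, H.h0]
        simpa [s1] using hl.split.1
      · rw [f3, hte] at he'
        cases he'
        rw [s1, q3, tgt' _ _ hte]
        exact hg2
      · have h4 : fg φ e' = some t := by rw [← he']; simp [fg, p4 e' h1 h2 h3]
        rw [s2 _ h3, q4 e' h1 h2 h3, tgt' _ _ h4]
        exact H.coh _ _ h4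
    · intro m b h
      by_cases hm : m = ℓ
      · simp [hm]
      · refine Finset.mem_insert_of_mem ?_
        by_cases hme : (m, b) = e
        · exact H.act m b (hme ▸ hφe)
        · rw [p4 _ hme (by simp [hm]) (by simp [hm])] at h
          exact H.act m b h
    · intro e' he'
      rcases hcase e' with rfl | rfl | rfl | ⟨h1, h2, h3⟩
      · rw [p1] at he'; cases he'
      · rw [p2] at he'; cases he'
      · rw [p3] at he'; exact absurd he' hφe
      · rw [p4 e' h1 h2 h3] at he'
        rw [q4 e' h1 h2 h3]
        exact H.ina e' he'
    · obtain ⟨le, se, hse, hle⟩ := H.kp e hφe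
      obtain ⟨le', hle'⟩ := tr _ _ _ hle
      have hℓt : ∃ l', Seg (fg φ') (ℓ, true) l' (Sum.inr se) := by
        cases hle' with
        | exit h => rw [f1] at h; cases h
        | cons h h' => rw [f1] at h; cases h; exact ⟨_, h'⟩
      obtain ⟨l3, hl3⟩ := hℓt
      intro e' he'
      rcases hcase e' with rfl | rfl | rfl | ⟨h1, h2, h3⟩
      · exact ⟨_, _, hse, hle'⟩
      · exact ⟨_, _, hse, Seg.cons f2 hl3⟩
      · exact ⟨_, _, hse, hl3⟩
      · rw [p4 e' h1 h2 h3] at he'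
        obtain ⟨l, s, h4, h5⟩ := H.kp e' he'
        obtain ⟨l', h6⟩ := tr _ _ _ h5
        exact ⟨l', s, h4, h6⟩
    · intro e'
      rcases hcase e' with rfl | rfl | rfl | ⟨h1, h2, h3⟩
      · rw [q1]; exact (List.nodup_append.1 hnd).1
      · rw [q2]; exact (List.nodup_append.1 hl.nodup).1
      · rw [q3]; exact (List.nodup_append.1 hnd).2.1
      · rw [q4 e' h1 h2 h3]; exact H.nd e'
    · have hown : ∀ e' z, z ∈ σ' e' → (e' = (ℓ, false) ∧ z ∈ l1) ∨
          (e' = e ∧ z ∈ σ e ∧ z ∈ u) ∨ (e' = (ℓ, true) ∧ z ∈ σ e ∧ z ∈ y :: v) ∨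
          (e' ≠ e ∧ z ∈ σ e') := by
        intro e' z hz
        rcases hcase e' with rfl | rfl | rfl | ⟨h1, h2, h3⟩
        · rw [q1] at hz; exact Or.inr (Or.inl ⟨rfl, (hmem z).1 (Or.inl hz), hz⟩)
        · rw [q2] at hz; exact Or.inl ⟨rfl, hz⟩
        · rw [q3] at hz
          exact Or.inr (Or.inr (Or.inl ⟨rfl, (hmem z).1 (Or.inr hz), hz⟩))
        · rw [q4 e' h1 h2 h3] at hz; exact Or.inr (Or.inr (Or.inr ⟨h1, hz⟩))
      intro e1 e2 z hz1 hz2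
      rcases hown e1 z hz1 with ⟨a1, a2⟩ | ⟨a1, a2, a3⟩ | ⟨a1, a2, a3⟩ | ⟨a1, a2⟩ <;>
      rcases hown e2 z hz2 with ⟨b1, b2⟩ | ⟨b1, b2, b3⟩ | ⟨b1, b2, b3⟩ | ⟨b1, b2⟩ <;>
      first
      | (rw [a1, b1]; done)
      | exact absurd ⟨_, b2⟩ (hu z a2)
      | exact absurd ⟨_, a2⟩ (hu z b2)
      | exact (hdis z a3 b3).elim
      | exact (hdis z b3 a3).elim
      | exact absurd (H.dj _ _ _ b2 a2) b1
      | exact absurd (H.dj _ _ _ a2 b2) a1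
      | exact H.dj _ _ _ a2 b2
    · intro m hm l s h1 h2
      by_cases h : m = ℓ
      · subst h; rw [p2]; simp
      · have h3 := H.cm m ((Finset.mem_insert.1 hm).resolve_left h) l s h1 h2
        by_cases h4 : (m, false) = e
        · rw [h4, p1]; simp
        · rw [p4 _ h4 (by simp [h]) (by simp)]
          exact h3

theorem compress {N X L : Type} [Fintype L] (g : N → Option (N ⊕ X)) (ι : L → N)
    (keep : X → Prop) :
    ∃ (φ : L × Bool → Option (L ⊕ X)) (σ : L × Bool → List N),
      (∀ e, (σ e).Nodup) ∧
      (∀ e e' y, y ∈ σ e → y ∈ σ e' → e = e') ∧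
      (∀ e y, y ∈ σ e → ∃ l s, keep s ∧ Seg g y l (Sum.inr s)) ∧
      (∀ ℓ l s, keep s → Seg g (ι ℓ) l (Sum.inr s) →
        ∃ l', Seg (fg φ) (ℓ, false) l' (Sum.inr s)) ∧
      (∀ ℓ l s, Seg (fg φ) (ℓ, false) l (Sum.inr s) →
        Seg g (ι ℓ) (l.flatMap σ) (Sum.inr s)) := by
  classical
  have : ∀ ls : Finset L, ∃ φ σ st, CInv g ι keep ls φ σ st := by
    intro ls
    induction ls using Finset.induction_on with
    | empty =>
      refine ⟨fun _ => none, fun _ => [], fun e => ι e.1, ?_⟩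
      constructor <;> simp [fg]
    | insert ℓ ls hℓ ih =>
      obtain ⟨φ, σ, st, H⟩ := ih
      exact H.insert_leaf hℓ
  obtain ⟨φ, σ, st, H⟩ := this Finset.univ
  have h4 : ∀ ℓ l s, Seg (fg φ) (ℓ, false) l (Sum.inr s) →
        Seg g (ι ℓ) (l.flatMap σ) (Sum.inr s) := by
    intro ℓ l s h
    have := H.flat h
    rwa [H.h0] at this
  refine ⟨φ, σ, H.nd, H.dj, ?_, ?_, h4⟩
  · intro e y hy
    have he : φ e ≠ none := by intro h; rw [H.ina e h] at hy; cases hy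
    obtain ⟨l, s, hk, hl⟩ := H.kp e he
    have h1 := H.flat hl
    obtain ⟨l', rfl⟩ := hl.head
    obtain ⟨u, v, huv⟩ := List.append_of_mem hy
    simp only [List.flatMap_cons, huv, List.append_assoc, List.cons_append] at h1
    exact ⟨_, s, hk, h1.split.2⟩
  · intro ℓ l s hk hl
    have he := H.cm ℓ (Finset.mem_univ _) l s hk hl
    obtain ⟨l', s', -, hl'⟩ := H.kp _ he
    obtain ⟨-, rfl⟩ := hl.det (h4 _ _ _ hl')
    exact ⟨l', hl'⟩

end Paper

namespace Paper

/-! ## The one-way automaton of merging forests, and its register updates -/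

section Forest
variable {A B : Type}

abbrev Lf (T : NoAccTrans A B) := {q : T.Q // ¬ T.fwd q}
abbrev Xf (T : NoAccTrans A B) := {q : T.Q // T.fwd q}
abbrev Ed (T : NoAccTrans A B) := Lf T × Bool
abbrev DSt (T : NoAccTrans A B) := Xf T × (Ed T → Option (Lf T ⊕ Xf T))
abbrev Nd (T : NoAccTrans A B) := Ed T ⊕ T.Q

open Classical in
/-- The transition function of `T`. -/
noncomputable def tnext (T : NoAccTrans A B) (p : T.Q) (a : A) : Option T.Q :=
  if h : ∃ q, (p, some a, q) ∈ T.Δ then some h.choose else none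

theorem tnext_some {T : NoAccTrans A B} (hT : Deterministic T.toTwoWayAut) {p a q} :
    tnext T p a = some q ↔ (p, some a, q) ∈ T.Δ := by
  unfold tnext
  constructor
  · intro h
    split at h
    · rename_i h'
      cases h
      exact h'.choose_spec
    · cases h
  · intro h
    have h' : ∃ q, (p, some a, q) ∈ T.Δ := ⟨q, h⟩
    rw [dif_pos h']
    exact congrArg some (hT _ _ _ _ h'.choose_spec h)

/-- The output of `T` on a letter. -/
noncomputable def lout (T : NoAccTrans A B) (a : A) (p : T.Q) : List B :=
  match tnext T p a with
  | some q => T.out (p, some a, q)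
  | none => []

open Classical in
/-- The graph obtained from a forest by adding one letter. -/
noncomputable def gr (T : NoAccTrans A B) (φ : Ed T → Option (Lf T ⊕ Xf T)) (a : A) :
    Nd T → Option (Nd T ⊕ Xf T)
  | Sum.inl e =>
    match φ e with
    | none => none
    | some (Sum.inl m) => some (Sum.inl (Sum.inl (m, true)))
    | some (Sum.inr s) => some (Sum.inl (Sum.inr s.1))
  | Sum.inr p =>
    match tnext T p a with
    | none => none
    | some q => if h : T.fwd q then some (Sum.inr ⟨q, h⟩)
      else some (Sum.inl (Sum.inl (⟨q, h⟩, false)))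

theorem gr_edge_inl {T : NoAccTrans A B} {φ : Ed T → Option (Lf T ⊕ Xf T)} {a e e'}
    (h : fg φ e = some (Sum.inl e')) : gr T φ a (Sum.inl e) = some (Sum.inl (Sum.inl e')) := by
  unfold fg at h
  rcases h1 : φ e with _ | (m | s) <;> rw [h1] at h <;> simp at h
  subst h
  simp [gr, h1]

theorem gr_edge_inr {T : NoAccTrans A B} {φ : Ed T → Option (Lf T ⊕ Xf T)} {a e s}
    (h : fg φ e = some (Sum.inr s)) :
    gr T φ a (Sum.inl e) = some (Sum.inl (Sum.inr s.1)) := by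
  unfold fg at h
  rcases h1 : φ e with _ | (m | s) <;> rw [h1] at h <;> simp at h
  subst h
  simp [gr, h1]

theorem gr_edge_cases {T : NoAccTrans A B} {φ : Ed T → Option (Lf T ⊕ Xf T)} {a e t}
    (h : gr T φ a (Sum.inl e) = some t) :
    (∃ e', fg φ e = some (Sum.inl e') ∧ t = Sum.inl (Sum.inl e')) ∨
    (∃ s : Xf T, fg φ e = some (Sum.inr s) ∧ t = Sum.inl (Sum.inr s.1)) := by
  rcases h1 : φ e with _ | (m | s) <;> simp [gr, h1] at h
  · exact Or.inl ⟨(m, true), by simp [fg, h1], h.symm⟩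
  · exact Or.inr ⟨s, by simp [fg, h1], h.symm⟩

theorem gr_state_cases {T : NoAccTrans A B} (hT : Deterministic T.toTwoWayAut)
    {φ : Ed T → Option (Lf T ⊕ Xf T)} {a p t}
    (h : gr T φ a (Sum.inr p) = some t) :
    (∃ s : Xf T, (p, some a, s.1) ∈ T.Δ ∧ lout T a p = T.out (p, some a, s.1) ∧ t = Sum.inr s) ∨
    (∃ r : Lf T, (p, some a, r.1) ∈ T.Δ ∧ lout T a p = T.out (p, some a, r.1) ∧
      t = Sum.inl (Sum.inl (r, false))) := by
  rcases h1 : tnext T p a with _ | q <;> simp [gr, h1] at h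
  have h2 := (tnext_some hT).1 h1
  by_cases hq : T.fwd q
  · rw [dif_pos hq] at h
    cases h
    exact Or.inl ⟨⟨q, hq⟩, h2, by simp [lout, h1], rfl⟩
  · rw [dif_neg hq] at h
    cases h
    exact Or.inr ⟨⟨q, hq⟩, h2, by simp [lout, h1], rfl⟩

theorem gr_state_fwd {T : NoAccTrans A B} (hT : Deterministic T.toTwoWayAut)
    {φ : Ed T → Option (Lf T ⊕ Xf T)} {a p} (s : Xf T) (h : (p, some a, s.1) ∈ T.Δ) :
    gr T φ a (Sum.inr p) = some (Sum.inr s) := by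
  simp [gr, (tnext_some hT).2 h, s.2]

theorem gr_state_bwd {T : NoAccTrans A B} (hT : Deterministic T.toTwoWayAut)
    {φ : Ed T → Option (Lf T ⊕ Xf T)} {a p} (r : Lf T) (h : (p, some a, r.1) ∈ T.Δ) :
    gr T φ a (Sum.inr p) = some (Sum.inl (Sum.inl (r, false))) := by
  simp [gr, (tnext_some hT).2 h, r.2]

theorem seg_gr_of_fg {T : NoAccTrans A B} {φ : Ed T → Option (Lf T ⊕ Xf T)} {a e l s}
    (h : Seg (fg φ) e l (Sum.inr s)) :
    Seg (gr T φ a) (Sum.inl e) (l.map Sum.inl) (Sum.inl (Sum.inr s.1)) := by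
  generalize ht : (Sum.inr s : _ ⊕ Xf T) = t0 at h
  induction h with
  | nil x => cases ht
  | exit h1 => cases ht; exact Seg.cons (gr_edge_inr h1) (Seg.nil _)
  | cons h1 _ ih => exact Seg.cons (gr_edge_inl h1) (ih ht)

theorem seg_gr_edge {T : NoAccTrans A B} {φ : Ed T → Option (Lf T ⊕ Xf T)} {a e l s}
    (h : Seg (gr T φ a) (Sum.inl e) l (Sum.inr s)) :
    ∃ (l1 : List (Ed T)) (s1 : Xf T) (l2 : List (Nd T)), l = l1.map Sum.inl ++ l2 ∧
      Seg (fg φ) e l1 (Sum.inr s1) ∧ Seg (gr T φ a) (Sum.inr s1.1) l2 (Sum.inr s) := by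
  generalize ht : (Sum.inr s : _ ⊕ Xf T) = t0 at h
  generalize hx : (Sum.inl e : Nd T) = x at h
  induction h generalizing e with
  | nil x => cases ht
  | exit h1 =>
    subst hx
    rcases gr_edge_cases h1 with ⟨e', -, h3⟩ | ⟨s1, -, h3⟩ <;> cases h3
  | @cons x y l t h1 h2 ih =>
    subst hx
    rcases gr_edge_cases h1 with ⟨e', h3, h4⟩ | ⟨s1, h3, h4⟩
    · cases h4
      obtain ⟨l1, s1, l2, rfl, h5, h6⟩ := ih ht rfl
      exact ⟨e :: l1, s1, l2, rfl, Seg.cons h3 h5, h6⟩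
    · cases h4
      subst ht
      exact ⟨[e], s1, l, rfl, Seg.exit h3, h2⟩

/-- The main run leaves the letter `a`. -/
def okD (T : NoAccTrans A B) (p : DSt T) (a : A) : Prop :=
  ∃ l s, Seg (gr T p.2 a) (Sum.inr p.1.1) l (Sum.inr s)

theorem dStep_exists (T : NoAccTrans A B) (p : DSt T) (a : A) :
    ∃ x : DSt T × (Option (Ed T) → List (Nd T)),
      (∀ y y' z, z ∈ x.2 y → z ∈ x.2 y' → y = y') ∧ (∀ y, (x.2 y).Nodup) ∧
      (okD T p a → Seg (gr T p.2 a) (Sum.inr p.1.1) (x.2 none) (Sum.inr x.1.1) ∧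
        (∀ (r : Lf T) l s, s ≠ x.1.1 → Seg (gr T p.2 a) (Sum.inr r.1) l (Sum.inr s) →
          ∃ l', Seg (fg x.1.2) (r, false) l' (Sum.inr s)) ∧
        (∀ (r : Lf T) l s, Seg (fg x.1.2) (r, false) l (Sum.inr s) →
          Seg (gr T p.2 a) (Sum.inr r.1) (l.flatMap fun e => x.2 (some e)) (Sum.inr s))) := by
  classical
  by_cases hok : okD T p a
  · obtain ⟨l, s, hl⟩ := id hok
    obtain ⟨φ, σ, h1, h2, h3, h4, h5⟩ :=
      compress (L := Lf T) (gr T p.2 a) (fun r => Sum.inr r.1) (fun s' => s' ≠ s)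
    have hno : ∀ e z, z ∈ l → z ∈ σ e → False := by
      intro e z hz hz'
      obtain ⟨l', s', hs', hl'⟩ := h3 e z hz'
      obtain ⟨u, v, rfl⟩ := List.append_of_mem hz
      exact hs' (hl'.det hl.split.2).2
    refine ⟨((s, φ), fun x => x.elim l σ), ?_, ?_, fun _ => ⟨hl, ?_, ?_⟩⟩
    · rintro (_ | e) (_ | e') z hz hz'
      · rfl
      · exact (hno _ _ hz hz').elim
      · exact (hno _ _ hz' hz).elim
      · exact congrArg some (h2 _ _ _ hz hz')
    · rintro (_ | e)
      · exact hl.nodup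
      · exact h1 e
    · intro r l' s' hs' hl'
      exact h4 r l' s' hs' hl'
    · intro r l' s' hl'
      exact h5 r l' s' hl'
  · exact ⟨(p, fun _ => []), by simp, by simp, fun h => absurd h hok⟩

noncomputable def dStep (T : NoAccTrans A B) (p : DSt T) (a : A) : DSt T :=
  (dStep_exists T p a).choose.1

noncomputable def sg (T : NoAccTrans A B) (p : DSt T) (a : A) : Option (Ed T) → List (Nd T) :=
  (dStep_exists T p a).choose.2

theorem sg_disj (T : NoAccTrans A B) (p : DSt T) (a : A) :
    ∀ y y' z, z ∈ sg T p a y → z ∈ sg T p a y' → y = y' :=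
  (dStep_exists T p a).choose_spec.1

theorem sg_nodup (T : NoAccTrans A B) (p : DSt T) (a : A) : ∀ y, (sg T p a y).Nodup :=
  (dStep_exists T p a).choose_spec.2.1

theorem sg_main {T : NoAccTrans A B} {p : DSt T} {a : A} (h : okD T p a) :
    Seg (gr T p.2 a) (Sum.inr p.1.1) (sg T p a none) (Sum.inr (dStep T p a).1) :=
  ((dStep_exists T p a).choose_spec.2.2 h).1

theorem sg_keep {T : NoAccTrans A B} {p : DSt T} {a : A} (h : okD T p a) :
    ∀ (r : Lf T) l s, s ≠ (dStep T p a).1 → Seg (gr T p.2 a) (Sum.inr r.1) l (Sum.inr s) →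
          ∃ l', Seg (fg (dStep T p a).2) (r, false) l' (Sum.inr s) :=
  ((dStep_exists T p a).choose_spec.2.2 h).2.1

theorem sg_flat {T : NoAccTrans A B} {p : DSt T} {a : A} (h : okD T p a) :
    ∀ (r : Lf T) l s, Seg (fg (dStep T p a).2) (r, false) l (Sum.inr s) →
          Seg (gr T p.2 a) (Sum.inr r.1) (l.flatMap fun e => sg T p a (some e)) (Sum.inr s) :=
  ((dStep_exists T p a).choose_spec.2.2 h).2.2

open Classical in
noncomputable def phi0 (T : NoAccTrans A B) (e : Ed T) : Option (Lf T ⊕ Xf T) :=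
  if e.2 = true then none
  else if h : ∃ s, (e.1.1, none, s) ∈ T.Δ then
    some (Sum.inr ⟨h.choose, (T.marker _ _ h.choose_spec).2⟩)
  else none

noncomputable def dInit (T : NoAccTrans A B) : DSt T := (⟨T.init, T.init_fwd⟩, phi0 T)

noncomputable def nu0 (T : NoAccTrans A B) (e : Ed T) : List B :=
  match phi0 T e with
  | some (Sum.inr s) => T.out (e.1.1, none, s.1)
  | _ => []

/-- The run of the one-way automaton. -/
noncomputable def dSeq (T : NoAccTrans A B) (w : ℕ → A) : ℕ → DSt T
  | 0 => dInit T
  | i + 1 => dStep T (dSeq T w i) (w i)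

/-- The contents of the registers. -/
noncomputable def nu (T : NoAccTrans A B) (w : ℕ → A) : ℕ → Ed T → List B
  | 0 => nu0 T
  | i + 1 => fun e => (sg T (dSeq T w i) (w i) (some e)).flatMap
      (Sum.elim (nu T w i) (lout T (w i)))

noncomputable def uu (T : NoAccTrans A B) (w : ℕ → A) (i : ℕ) : List B :=
  (sg T (dSeq T w i) (w i) none).flatMap (Sum.elim (nu T w i) (lout T (w i)))

structure FInv (T : NoAccTrans A B) (w : ℕ → A) (i : ℕ) : Prop where
  snd : ∀ (r : Lf T) l (s : Xf T), Seg (fg (dSeq T w i).2) (r, false) l (Sum.inr s) →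
    Exc T w i r.1 (l.flatMap (nu T w i)) s.1
  cmp : ∀ (r : Lf T) o (s : Xf T), Exc T w i r.1 o s.1 → s ≠ (dSeq T w i).1 →
    ∃ l, Seg (fg (dSeq T w i).2) (r, false) l (Sum.inr s)

theorem finv_zero {T : NoAccTrans A B} (hT : Deterministic T.toTwoWayAut) (w : ℕ → A) :
    FInv T w 0 := by
  have key : ∀ (r : Lf T) t, phi0 T (r, false) = some t →
      ∃ s : Xf T, (r.1, none, s.1) ∈ T.Δ ∧ t = Sum.inr s ∧
        nu0 T (r, false) = T.out (r.1, none, s.1) := by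
    intro r t h
    have h0 := h
    unfold phi0 at h
    simp only [Bool.false_eq_true, if_false] at h
    split at h
    · rename_i h'
      cases h
      refine ⟨_, h'.choose_spec, rfl, ?_⟩
      simp [nu0, h0]
    · cases h
  constructor
  · intro r l s h
    change Seg (fg (phi0 T)) _ _ _ at h
    cases h with
    | exit h =>
      unfold fg at h
      rcases h1 : phi0 T (r, false) with _ | t <;> rw [h1] at h <;> simp at h
      obtain ⟨s1, h2, rfl, h3⟩ := key _ _ h1
      simp at h
      subst h
      exact ⟨h2, by simp [nu, h3]⟩
    | cons h _ =>
      unfold fg at h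
      rcases h1 : phi0 T (r, false) with _ | t <;> rw [h1] at h <;> simp at h
      obtain ⟨s1, h2, rfl, h3⟩ := key _ _ h1
      simp at h
  · intro r o s h _
    obtain ⟨h, -⟩ := h
    have h' : ∃ s, (r.1, none, s) ∈ T.Δ := ⟨_, h⟩
    have h1 : phi0 T (r, false) = some (Sum.inr s) := by
      unfold phi0
      simp only [Bool.false_eq_true, if_false, dif_pos h']
      congr 2
      exact Subtype.ext (hT _ _ _ _ h'.choose_spec h)
    exact ⟨_, Seg.exit (by
      change fg (phi0 T) (r, false) = _
      unfold fg; rw [h1]; rfl)⟩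

theorem seg_walk {T : NoAccTrans A B} (hT : Deterministic T.toTwoWayAut) {w : ℕ → A} {i : ℕ}
    (H : FInv T w i) (n : ℕ) : ∀ (l : List (Nd T)) (p : T.Q) (s : Xf T), l.length = n →
      Seg (gr T (dSeq T w i).2 (w i)) (Sum.inr p) l (Sum.inr s) →
      ∃ k, Walk T (w i) (Exc T w i) k p
        (l.flatMap (Sum.elim (nu T w i) (lout T (w i)))) s.1 := by
  induction n using Nat.strong_induction_on with
  | _ n ih =>
    intro l p s hn h
    cases h with
    | exit h =>
      rcases gr_state_cases hT h with ⟨s1, h1, h2, h3⟩ | ⟨r, h1, h2, h3⟩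
      · cases h3
        refine ⟨0, ?_⟩
        simp only [List.flatMap_cons, List.flatMap_nil, Sum.elim_inr, h2, List.append_nil]
        exact Walk.exit h1 s.2
      · cases h3
    | @cons _ y l _ h h' =>
      rcases gr_state_cases hT h with ⟨s1, h1, h2, h3⟩ | ⟨r, h1, h2, h3⟩
      · cases h3
      · cases h3
        obtain ⟨l1, s1, l2, rfl, h5, h6⟩ := seg_gr_edge h'
        obtain ⟨k, hk⟩ := ih l2.length (by simp at hn; omega) l2 s1.1 s rfl h6
        refine ⟨k + 1, ?_⟩
        have := Walk.step h1 r.2 (H.snd _ _ _ h5) hk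
        simpa [List.flatMap_cons, h2, List.flatMap_append, List.flatMap_map,
          Function.comp_def] using this

theorem walk_seg {T : NoAccTrans A B} (hT : Deterministic T.toTwoWayAut) {w : ℕ → A} {i : ℕ}
    (H : FInv T w i) {k p o s} (h : Walk T (w i) (Exc T w i) k p o s) :
    (∃ l s', s'.1 = s ∧ Seg (gr T (dSeq T w i).2 (w i)) (Sum.inr p) l (Sum.inr s')) ∨
    (∃ k' o', k' < k ∧ Walk T (w i) (Exc T w i) k' (dSeq T w i).1.1 o' s) := by
  induction h with
  | @exit p s h1 h2 =>
    exact Or.inl ⟨_, ⟨s, h2⟩, rfl, Seg.exit (gr_state_fwd hT ⟨s, h2⟩ h1)⟩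
  | @step p r o1 s1 k o2 s h1 h2 hx hw ih =>
    by_cases hs : s1 = (dSeq T w i).1.1
    · subst hs
      exact Or.inr ⟨k, _, by omega, hw⟩
    · obtain ⟨l1, hl1⟩ := H.cmp ⟨r, h2⟩ o1 ⟨s1, hx.fwd_end⟩ hx
        (fun h => hs (congrArg Subtype.val h))
      rcases ih with ⟨l, s', rfl, hl⟩ | ⟨k', o', hk, hw'⟩
      · exact Or.inl ⟨_, s', rfl, Seg.cons (gr_state_bwd hT ⟨r, h2⟩ h1)
          ((seg_gr_of_fg hl1).append hl)⟩
      · exact Or.inr ⟨k', o', by omega, hw'⟩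

theorem ok_of_walk {T : NoAccTrans A B} (hT : Deterministic T.toTwoWayAut) {w : ℕ → A} {i : ℕ}
    (H : FInv T w i) (k : ℕ) : ∀ o s, Walk T (w i) (Exc T w i) k (dSeq T w i).1.1 o s →
      okD T (dSeq T w i) (w i) := by
  induction k using Nat.strong_induction_on with
  | _ k ih =>
    intro o s h
    rcases walk_seg hT H h with ⟨l, s', -, hl⟩ | ⟨k', o', hk, hw⟩
    · exact ⟨l, s', hl⟩
    · exact ih k' hk _ _ hw

theorem main_walk {T : NoAccTrans A B} (hT : Deterministic T.toTwoWayAut) {w : ℕ → A} {i : ℕ}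
    (H : FInv T w i) (hok : okD T (dSeq T w i) (w i)) :
    ∃ k, Walk T (w i) (Exc T w i) k (dSeq T w i).1.1 (uu T w i) (dSeq T w (i + 1)).1.1 :=
  seg_walk hT H _ _ _ _ rfl (sg_main hok)

theorem finv_succ {T : NoAccTrans A B} (hT : Deterministic T.toTwoWayAut) {w : ℕ → A} {i : ℕ}
    (H : FInv T w i) (hok : okD T (dSeq T w i) (w i)) : FInv T w (i + 1) := by
  constructor
  · intro r l s h
    obtain ⟨k, hk⟩ := seg_walk hT H _ _ _ _ rfl (sg_flat hok r l s h)
    rw [List.flatMap_assoc] at hk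
    exact ⟨k, hk⟩
  · rintro r o s ⟨k, hk⟩ hs
    rcases walk_seg hT H hk with ⟨l, s', h1, hl⟩ | ⟨k', o', -, hw⟩
    · cases Subtype.ext h1
      exact sg_keep hok r l s hs hl
    · obtain ⟨k2, hk2⟩ := main_walk hT H hok
      exact absurd (Subtype.ext (hw.det hT (Exc.det hT w i) hk2)) hs

theorem finv_all {T : NoAccTrans A B} (hT : Deterministic T.toTwoWayAut) {w : ℕ → A} (i : ℕ)
    (hok : ∀ j < i, okD T (dSeq T w j) (w j)) : FInv T w i := by
  induction i with
  | zero => exact finv_zero hT w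
  | succ i ih => exact finv_succ hT (ih fun j hj => hok j (by omega)) (hok i (by omega))

/-- The checkpoints of `T`. -/
theorem main_run {T : NoAccTrans A B} (hT : Deterministic T.toTwoWayAut) {w : ℕ → A} (i : ℕ)
    (hok : ∀ j ≤ i, okD T (dSeq T w j) (w j)) :
    ∃ k, 1 ≤ k ∧ Run T w k ((dSeq T w i).1.1, i) (uu T w i) ((dSeq T w (i + 1)).1.1, i + 1) := by
  obtain ⟨k, hk⟩ := main_walk hT (finv_all hT i fun j hj => hok j hj.le) (hok i le_rfl)
  have := hk.run (Exc.run i)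
  rwa [show cellPos T (dSeq T w i).1.1 i = i from if_pos (dSeq T w i).1.2] at this

theorem main_run_to {T : NoAccTrans A B} (hT : Deterministic T.toTwoWayAut) {w : ℕ → A} (i : ℕ)
    (hok : ∀ j < i, okD T (dSeq T w j) (w j)) :
    ∃ k o, Run T w k (T.init, 0) o ((dSeq T w i).1.1, i) := by
  induction i with
  | zero => exact ⟨0, [], Run.nil _⟩
  | succ i ih =>
    obtain ⟨k, o, h⟩ := ih fun j hj => hok j (by omega)
    obtain ⟨k', -, h'⟩ := main_run hT i fun j hj => hok j (by omega)
    exact ⟨_, _, h.trans h'⟩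

/-- If the main run gets stuck, then `T` does not realize anything. -/
theorem not_ok_not_realizes {T : NoAccTrans A B} (hT : Deterministic T.toTwoWayAut) {w : ℕ → A}
    {i : ℕ} (hok : ∀ j < i, okD T (dSeq T w j) (w j)) (hn : ¬ okD T (dSeq T w i) (w i))
    (x : ℕ → B) : ¬ T.Realizes w x := by
  intro h
  obtain ⟨k, o, hr⟩ := main_run_to hT i hok
  obtain ⟨m, o, s, hw⟩ := realizes_walk hT h (dSeq T w i).1.2 hr
  exact hn (ok_of_walk hT (finv_all hT i hok) m _ _ hw)

end Forest

end Paper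

namespace Paper

/-! ## The reversible evaluator of the registers -/

section Eval
variable {A B : Type}

abbrev EvQ (T : NoAccTrans A B) := Option (Ed T × Bool)

def evHd (T : NoAccTrans A B) : Option (Ed T) → EvQ T
  | none => none
  | some e => some (e, false)

def evTl (T : NoAccTrans A B) : Option (Ed T) → EvQ T
  | none => none
  | some e => some (e, true)

def EvTr (T : NoAccTrans A B) (p : DSt T) (a : A) (src : EvQ T) (ys : List T.Q)
    (dst : EvQ T) : Prop :=
  ∃ (x : Option (Ed T)) (pre tail : List (Nd T)), (x = none → okD T p a) ∧
    sg T p a x = pre ++ (ys.map Sum.inr ++ tail) ∧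
    ((pre = [] ∧ src = evHd T x) ∨ ∃ e l1, pre = l1 ++ [Sum.inl e] ∧ src = some (e, true)) ∧
    ((tail = [] ∧ dst = evTl T x) ∨ ∃ e l2, tail = Sum.inl e :: l2 ∧ dst = some (e, false))

theorem block_unique {E Q : Type} {ys ys' : List Q} {t t' : List (E ⊕ Q)}
    (h : ys.map Sum.inr ++ t = ys'.map Sum.inr ++ t')
    (ht : t = [] ∨ ∃ e l, t = Sum.inl e :: l) (ht' : t' = [] ∨ ∃ e l, t' = Sum.inl e :: l) :
    ys = ys' ∧ t = t' := by
  induction ys generalizing ys' with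
  | nil =>
    cases ys' with
    | nil => exact ⟨rfl, by simpa using h⟩
    | cons y ys' =>
      rcases ht with rfl | ⟨e, l, rfl⟩ <;> simp at h
  | cons y ys ih =>
    cases ys' with
    | nil => rcases ht' with rfl | ⟨e, l, rfl⟩ <;> simp at h
    | cons y' ys' =>
      simp only [List.map_cons, List.cons_append, List.cons.injEq, Sum.inr.injEq] at h
      obtain ⟨rfl, h⟩ := h
      obtain ⟨rfl, rfl⟩ := ih h
      exact ⟨rfl, rfl⟩

theorem block_unique' {E Q : Type} {ys ys' : List Q} {t t' : List (E ⊕ Q)}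
    (h : t ++ ys.map Sum.inr = t' ++ ys'.map Sum.inr)
    (ht : t = [] ∨ ∃ e l, t = l ++ [Sum.inl e]) (ht' : t' = [] ∨ ∃ e l, t' = l ++ [Sum.inl e]) :
    ys = ys' ∧ t = t' := by
  have h2 := congrArg List.reverse h
  simp only [List.reverse_append, ← List.map_reverse] at h2
  obtain ⟨h3, h4⟩ := block_unique h2
    (by rcases ht with rfl | ⟨e, l, rfl⟩
        · left; rfl
        · right; exact ⟨e, l.reverse, by simp⟩)
    (by rcases ht' with rfl | ⟨e, l, rfl⟩
        · left; rfl
        · right; exact ⟨e, l.reverse, by simp⟩)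
  exact ⟨List.reverse_injective h3, List.reverse_injective h4⟩

theorem nodup_split {N : Type} {z : N} {l1 l1' l2 l2' : List N} (h : (l1 ++ z :: l2).Nodup)
    (he : l1 ++ z :: l2 = l1' ++ z :: l2') : l1 = l1' ∧ l2 = l2' := by
  induction l1 generalizing l1' with
  | nil =>
    cases l1' with
    | nil => exact ⟨rfl, by simpa using he⟩
    | cons y l1' =>
      exfalso
      simp only [List.nil_append, List.cons_append, List.cons.injEq] at he
      obtain ⟨rfl, rfl⟩ := he
      simp at h
  | cons y l1 ih =>
    cases l1' with
    | nil =>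
      exfalso
      simp only [List.nil_append, List.cons_append, List.cons.injEq] at he
      obtain ⟨rfl, rfl⟩ := he
      simp at h
    | cons y' l1' =>
      simp only [List.cons_append, List.cons.injEq] at he
      obtain ⟨rfl, he⟩ := he
      obtain ⟨rfl, rfl⟩ := ih (List.nodup_cons.1 h).2 he
      exact ⟨rfl, rfl⟩

theorem evHd_inj {T : NoAccTrans A B} {x x'} (h : evHd T x = evHd T x') : x = x' := by
  rcases x with _ | e <;> rcases x' with _ | e' <;> simp [evHd] at h ⊢
  exact h

theorem evTl_inj {T : NoAccTrans A B} {x x'} (h : evTl T x = evTl T x') : x = x' := by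
  rcases x with _ | e <;> rcases x' with _ | e' <;> simp [evTl] at h ⊢
  exact h

theorem evHd_ne {T : NoAccTrans A B} {x e} (h : evHd T x = some (e, true)) : False := by
  rcases x with _ | e <;> simp [evHd] at h

theorem evTl_ne {T : NoAccTrans A B} {x e} (h : evTl T x = some (e, false)) : False := by
  rcases x with _ | e <;> simp [evTl] at h

theorem evTr_det {T : NoAccTrans A B} {p a src ys dst ys' dst'}
    (h : EvTr T p a src ys dst) (h' : EvTr T p a src ys' dst') : ys = ys' ∧ dst = dst' := by
  obtain ⟨x, pre, tail, -, h1, h2, h3⟩ := h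
  obtain ⟨x', pre', tail', -, h1', h2', h3'⟩ := h'
  have key : x = x' ∧ ys.map Sum.inr ++ tail = ys'.map Sum.inr ++ tail' := by
    rcases h2 with ⟨rfl, rfl⟩ | ⟨e, l1, rfl, rfl⟩ <;>
    rcases h2' with ⟨rfl, h2'⟩ | ⟨e', l1', rfl, h2'⟩
    · cases evHd_inj h2'
      refine ⟨rfl, ?_⟩
      rw [h1] at h1'
      exact h1'
    · exact (evHd_ne h2').elim
    · exact (evHd_ne h2'.symm).elim
    · cases h2'
      simp only [List.append_assoc, List.cons_append, List.nil_append] at h1 h1'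
      have hx : x = x' := sg_disj T p a x x' (Sum.inl e) (by rw [h1]; simp) (by rw [h1']; simp)
      subst hx
      refine ⟨rfl, ?_⟩
      rw [h1] at h1'
      exact (nodup_split (h1 ▸ sg_nodup T p a x) h1').2
  obtain ⟨rfl, he⟩ := key
  obtain ⟨rfl, rfl⟩ := block_unique he
    (by rcases h3 with h3 | ⟨e, l2, h3, -⟩
        · exact Or.inl h3.1
        · exact Or.inr ⟨e, l2, h3⟩)
    (by rcases h3' with h3 | ⟨e, l2, h3, -⟩
        · exact Or.inl h3.1
        · exact Or.inr ⟨e, l2, h3⟩)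
  refine ⟨rfl, ?_⟩
  rcases h3 with ⟨rfl, rfl⟩ | ⟨e, l1, rfl, rfl⟩ <;>
  rcases h3' with ⟨h4, h3'⟩ | ⟨e', l1', h4, h3'⟩
  · exact h3'.symm
  · cases h4
  · cases h4
  · cases h4; exact h3'.symm

theorem evTr_codet {T : NoAccTrans A B} {p a src ys dst ys' src'}
    (h : EvTr T p a src ys dst) (h' : EvTr T p a src' ys' dst) : src = src' := by
  obtain ⟨x, pre, tail, -, h1, h2, h3⟩ := h
  obtain ⟨x', pre', tail', -, h1', h2', h3'⟩ := h'
  rw [← List.append_assoc] at h1 h1'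
  have key : x = x' ∧ pre ++ ys.map Sum.inr = pre' ++ ys'.map Sum.inr := by
    rcases h3 with ⟨rfl, rfl⟩ | ⟨e, l1, rfl, rfl⟩ <;>
    rcases h3' with ⟨rfl, h3'⟩ | ⟨e', l1', rfl, h3'⟩
    · cases evTl_inj h3'
      refine ⟨rfl, ?_⟩
      rw [h1] at h1'
      simpa using h1'
    · exact (evTl_ne h3').elim
    · exact (evTl_ne h3'.symm).elim
    · cases h3'
      have hx : x = x' := sg_disj T p a x x' (Sum.inl e) (by rw [h1]; simp) (by rw [h1']; simp)
      subst hx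
      refine ⟨rfl, ?_⟩
      rw [h1] at h1'
      exact (nodup_split (h1 ▸ sg_nodup T p a x) h1').1
  obtain ⟨rfl, he⟩ := key
  obtain ⟨rfl, rfl⟩ := block_unique' he
    (by rcases h2 with h3 | ⟨e, l2, h3, -⟩
        · exact Or.inl h3.1
        · exact Or.inr ⟨e, l2, h3⟩)
    (by rcases h2' with h3 | ⟨e, l2, h3, -⟩
        · exact Or.inl h3.1
        · exact Or.inr ⟨e, l2, h3⟩)
  rcases h2 with ⟨rfl, rfl⟩ | ⟨e, l1, rfl, rfl⟩ <;>
  rcases h2' with ⟨h4, h2'⟩ | ⟨e', l1', h4, h2'⟩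
  · exact h2'.symm
  · simp at h4
  · simp at h4
  · have h5 := List.append_inj' h4 rfl
    simp at h5
    rw [h2', h5.2]

open Classical in
/-- The evaluator. -/
noncomputable def ev (T : NoAccTrans A B) : NoAccTrans (DSt T × A) B where
  Q := EvQ T
  finQ := Fintype.ofFinite _
  fwd := fun q => ∀ e, q ≠ some (e, false)
  init := none
  init_fwd := by simp
  Δ := {t | match t.2.1 with
    | some c => ∃ ys, EvTr T c.1 c.2 t.1 ys t.2.2
    | none => ∃ e, t.1 = some (e, false) ∧ t.2.2 = some (e, true)}
  marker := by
    rintro p q ⟨e, h1, h2⟩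
    simp only at h1 h2
    subst h1 h2
    simp
  out := fun t => match t.2.1 with
    | some c => if h : ∃ ys, EvTr T c.1 c.2 t.1 ys t.2.2 then
        h.choose.flatMap (lout T c.2) else []
    | none => match t.1 with
      | some e => nu0 T e.1
      | none => []

theorem ev_mem {T : NoAccTrans A B} {src : EvQ T} {c dst} :
    ((src, some c, dst) : (ev T).Q × _ × (ev T).Q) ∈ (ev T).Δ ↔
      ∃ ys, EvTr T c.1 c.2 src ys dst := Iff.rfl

theorem ev_mem_none {T : NoAccTrans A B} {src dst : EvQ T} :
    ((src, none, dst) : (ev T).Q × _ × (ev T).Q) ∈ (ev T).Δ ↔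
      ∃ e, src = some (e, false) ∧ dst = some (e, true) := Iff.rfl

open Classical in
theorem ev_out {T : NoAccTrans A B} {src : EvQ T} {c ys dst} (h : EvTr T c.1 c.2 src ys dst) :
    (ev T).out (src, some c, dst) = ys.flatMap (lout T c.2) := by
  have h' : ∃ ys, EvTr T c.1 c.2 src ys dst := ⟨ys, h⟩
  change (if h : ∃ ys, EvTr T c.1 c.2 src ys dst then
        h.choose.flatMap (lout T c.2) else []) = _
  rw [dif_pos h', (evTr_det h'.choose_spec h).1]

theorem ev_reversible (T : NoAccTrans A B) : Reversible (ev T).toTwoWayAut := by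
  constructor
  · rintro p (_ | c) q q' h h'
    · obtain ⟨e, rfl, rfl⟩ := ev_mem_none.1 h
      obtain ⟨e', h1, rfl⟩ := ev_mem_none.1 h'
      cases h1
      rfl
    · obtain ⟨ys, h⟩ := ev_mem.1 h
      obtain ⟨ys', h'⟩ := ev_mem.1 h'
      exact (evTr_det h h').2
  · rintro p p' (_ | c) q h h'
    · obtain ⟨e, rfl, rfl⟩ := ev_mem_none.1 h
      obtain ⟨e', rfl, h1⟩ := ev_mem_none.1 h'
      cases h1
      rfl
    · obtain ⟨ys, h⟩ := ev_mem.1 h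
      obtain ⟨ys', h'⟩ := ev_mem.1 h'
      exact evTr_codet h h'

/-- The word annotated with the states of the one-way automaton. -/
noncomputable def om (T : NoAccTrans A B) (w : ℕ → A) (i : ℕ) : DSt T × A := (dSeq T w i, w i)

theorem block_split {E Q : Type} (l : List (E ⊕ Q)) :
    ∃ (ys : List Q) (t : List (E ⊕ Q)), l = ys.map Sum.inr ++ t ∧
      (t = [] ∨ ∃ e l, t = Sum.inl e :: l) := by
  induction l with
  | nil => exact ⟨[], [], rfl, Or.inl rfl⟩
  | cons z l ih =>
    rcases z with e | q
    · exact ⟨[], _, rfl, Or.inr ⟨e, l, rfl⟩⟩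
    · obtain ⟨ys, t, rfl, h⟩ := ih
      exact ⟨q :: ys, t, rfl, h⟩

theorem ev_fwd_tl {T : NoAccTrans A B} (x) : (ev T).fwd (evTl T x) := by
  intro e h; exact evTl_ne h

theorem ev_block {T : NoAccTrans A B} {w : ℕ → A} {i : ℕ}
    (H : ∀ e : Ed T, ∃ k, Run (ev T) (om T w) k ((some (e, false) : EvQ T), i) (nu T w i e)
      ((some (e, true) : EvQ T), i))
    (x : Option (Ed T)) (hx : x = none → okD T (dSeq T w i) (w i)) (n : ℕ) :
    ∀ (pre rest : List (Nd T)) (src : EvQ T), rest.length = n →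
      sg T (dSeq T w i) (w i) x = pre ++ rest →
      ((pre = [] ∧ src = evHd T x) ∨ ∃ e l1, pre = l1 ++ [Sum.inl e] ∧ src = some (e, true)) →
      ∃ k, 1 ≤ k ∧ Run (ev T) (om T w) k (src, cellPos (ev T) src i)
        (rest.flatMap (Sum.elim (nu T w i) (lout T (w i)))) (evTl T x, i + 1) := by
  classical
  induction n using Nat.strong_induction_on with
  | _ n ih =>
    intro pre rest src hn hs hsrc
    obtain ⟨ys, t, rfl, ht⟩ := block_split rest
    rcases ht with rfl | ⟨e, l, rfl⟩
    · have htr : EvTr T (om T w i).1 (om T w i).2 src ys (evTl T x) :=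
        ⟨x, pre, [], hx, hs, hsrc, Or.inl ⟨rfl, rfl⟩⟩
      have h := cell_step (T := ev T) (w := om T w) (p := src) (q := evTl T x) (i := i)
        (ev_mem.2 ⟨ys, htr⟩)
      rw [if_pos (ev_fwd_tl x), ev_out htr] at h
      refine ⟨1, le_rfl, ?_⟩
      simpa [List.flatMap_map, om] using Run.single h
    · have htr : EvTr T (om T w i).1 (om T w i).2 src ys (some (e, false)) :=
        ⟨x, pre, _, hx, hs, hsrc, Or.inr ⟨e, l, rfl, rfl⟩⟩
      have h := cell_step (T := ev T) (w := om T w) (p := src) (q := (some (e, false) : EvQ T))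
        (i := i) (ev_mem.2 ⟨ys, htr⟩)
      rw [if_neg (fun h => h e rfl), ev_out htr] at h
      obtain ⟨k1, hk1⟩ := H e
      obtain ⟨k2, hk2, hk2'⟩ := ih l.length (by simp at hn; omega)
        (pre ++ (ys.map Sum.inr ++ [Sum.inl e])) l (some (e, true)) rfl (by simp [hs])
        (Or.inr ⟨e, pre ++ ys.map Sum.inr, by simp, rfl⟩)
      rw [show cellPos (ev T) (some (e, true) : EvQ T) i = i from
        if_pos (fun e' h => by simp at h)] at hk2'
      refine ⟨k1 + k2 + 1, by omega, ?_⟩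
      have := Run.cons h (hk1.trans hk2')
      simpa [List.flatMap_map, om] using this

theorem ev_reg {T : NoAccTrans A B} {w : ℕ → A} (i : ℕ) :
    ∀ e : Ed T, ∃ k, Run (ev T) (om T w) k ((some (e, false) : EvQ T), i) (nu T w i e)
      ((some (e, true) : EvQ T), i) := by
  induction i with
  | zero =>
    intro e
    refine ⟨1, Run.single ⟨((some (e, false) : EvQ T), none, (some (e, true) : EvQ T)),
      ⟨ev_mem_none.2 ⟨e, rfl, rfl⟩, rfl, rfl, Or.inr (Or.inr ⟨?_, rfl, rfl, rfl⟩)⟩, rfl⟩⟩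
    exact fun h => h e rfl
  | succ i ih =>
    intro e
    obtain ⟨k, -, hk⟩ := ev_block ih (some e) (by simp) _ [] _ _ rfl rfl (Or.inl ⟨rfl, rfl⟩)
    rw [show cellPos (ev T) (evHd T (some e)) i = i + 1 from if_neg (fun h => h e rfl)] at hk
    exact ⟨k, hk⟩

theorem ev_main {T : NoAccTrans A B} {w : ℕ → A} (i : ℕ)
    (h : okD T (dSeq T w i) (w i)) :
    ∃ k, 1 ≤ k ∧ Run (ev T) (om T w) k ((none : EvQ T), i) (uu T w i) ((none : EvQ T), i + 1) := by
  obtain ⟨k, hk1, hk⟩ := ev_block (ev_reg i) none (fun _ => h) _ [] _ _ rfl rfl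
    (Or.inl ⟨rfl, rfl⟩)
  rw [show cellPos (ev T) (evHd T none) i = i from if_pos (fun e h => by cases h)] at hk
  exact ⟨k, hk1, hk⟩

theorem ev_stuck {T : NoAccTrans A B} {w : ℕ → A} {i : ℕ}
    (h : ¬ okD T (dSeq T w i) (w i)) :
    ∀ o c, ¬ CStep (ev T) (om T w) ((none : EvQ T), i) o c := by
  intro o c hc
  have hc' : CStep (ev T) (om T w) ((none : EvQ T), cellPos (ev T) (none : EvQ T) i) o c := by
    rw [show cellPos (ev T) (none : EvQ T) i = i from if_pos (fun e h => by cases h)]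
    exact hc
  obtain ⟨⟨ys, x, pre, tail, h1, -, h2, -⟩, -⟩ := cstep_cell (T := ev T) hc'
  rcases h2 with ⟨-, h2⟩ | ⟨e, l, -, h2⟩
  · rcases x with _ | e
    · exact h (h1 rfl)
    · cases h2
  · cases h2

end Eval

end Paper

namespace Paper

/-! ## Composition with a reversible walker -/

section Composite
variable {A B P V : Type}

/-- Transitions of the composite transducer inside a letter, from the endpoint `i` to the
endpoint `e`; an endpoint is a pair `(side, v)`. -/
def CT (S : NoAccTrans (P × A) B) (μ : A → Bool × V → Bool × V) (core : P → V) (a : A)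
    (i : Bool × V) (s : S.Q) (o : List B) (e : Bool × V) (s' : S.Q) : Prop :=
  (∃ p, i = (false, core p) ∧ S.fwd s ∧ (s, some (p, a), s') ∈ S.Δ ∧
    o = S.out (s, some (p, a), s') ∧
    ((S.fwd s' ∧ e = μ a i) ∨ (¬ S.fwd s' ∧ e = i))) ∨
  (∃ p, μ a i = (false, core p) ∧ ¬ S.fwd s ∧ (s, some (p, a), s') ∈ S.Δ ∧
    o = S.out (s, some (p, a), s') ∧
    ((¬ S.fwd s' ∧ e = μ a i) ∨ (S.fwd s' ∧ e = i))) ∨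
  ((∀ p, i ≠ (false, core p)) ∧ (∀ p, μ a i ≠ (false, core p)) ∧ s = s' ∧ o = [] ∧ e = μ a i)

/-- Transitions of the composite transducer on the end-marker. -/
def CM (S : NoAccTrans (P × A) B) (m0 : V → Option V) (core : P → V) (p0 : P)
    (v : V) (s : S.Q) (o : List B) (v' : V) (s' : S.Q) : Prop :=
  (v = core p0 ∧ v' = core p0 ∧ (s, none, s') ∈ S.Δ ∧ o = S.out (s, none, s')) ∨
  (m0 v = some v' ∧ s = s' ∧ o = [])

theorem CT.det {S : NoAccTrans (P × A) B} (hS : Deterministic S.toTwoWayAut)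
    {μ : A → Bool × V → Bool × V} {core : P → V} (hc : Function.Injective core)
    {a i s o e s' o1 e1 s1} (h : CT S μ core a i s o e s') (h' : CT S μ core a i s o1 e1 s1) :
    o = o1 ∧ e = e1 ∧ s' = s1 := by
  rcases h with ⟨p, h1, h2, h3, rfl, h4⟩ | ⟨p, h1, h2, h3, rfl, h4⟩ | ⟨h1, h2, h3, h4, h5⟩ <;>
  rcases h' with ⟨p', h1', h2', h3', rfl, h4'⟩ | ⟨p', h1', h2', h3', rfl, h4'⟩ |
    ⟨h1', h2', h3', h4', h5'⟩
  · have : p = p' := by rw [h1] at h1'; simpa [hc.eq_iff] using h1'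
    subst this
    cases hS _ _ _ _ h3 h3'
    refine ⟨rfl, ?_, rfl⟩
    rcases h4 with ⟨h4, rfl⟩ | ⟨h4, rfl⟩ <;> rcases h4' with ⟨h4', rfl⟩ | ⟨h4', rfl⟩ <;>
      first | rfl | exact absurd h4 h4' | exact absurd h4' h4
  · exact absurd h2 h2'
  · exact absurd h1 (h1' p)
  · exact absurd h2' h2
  · have : p = p' := by rw [h1] at h1'; simpa [hc.eq_iff] using h1'
    subst this
    cases hS _ _ _ _ h3 h3'
    refine ⟨rfl, ?_, rfl⟩
    rcases h4 with ⟨h4, rfl⟩ | ⟨h4, rfl⟩ <;> rcases h4' with ⟨h4', rfl⟩ | ⟨h4', rfl⟩ <;>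
      first | rfl | exact absurd h4 h4' | exact absurd h4' h4
  · exact absurd h1 (h2' p)
  · exact absurd h1' (h1 p')
  · exact absurd h1' (h2 p')
  · subst h3 h3' h4 h4' h5 h5'; exact ⟨rfl, rfl, rfl⟩

theorem CT.codet {S : NoAccTrans (P × A) B} (hS : Codeterministic S.toTwoWayAut)
    {μ : A → Bool × V → Bool × V} (hμ : ∀ a i, μ a (μ a i) = i)
    {core : P → V} (hc : Function.Injective core)
    {a i s o e s' o1 i1 s1} (h : CT S μ core a i s o e s') (h' : CT S μ core a i1 s1 o1 e s') :
    i = i1 ∧ s = s1 := by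
  have key : ∀ {i s o}, CT S μ core a i s o e s' →
      (∃ p, S.fwd s' ∧ μ a e = (false, core p) ∧ (s, some (p, a), s') ∈ S.Δ ∧
        ((S.fwd s ∧ i = μ a e) ∨ (¬ S.fwd s ∧ i = e))) ∨
      (∃ p, ¬ S.fwd s' ∧ e = (false, core p) ∧ (s, some (p, a), s') ∈ S.Δ ∧
        ((S.fwd s ∧ i = e) ∨ (¬ S.fwd s ∧ i = μ a e))) ∨
      ((∀ p, e ≠ (false, core p)) ∧ (∀ p, μ a e ≠ (false, core p)) ∧ s = s' ∧ i = μ a e) := by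
    intro i s o h
    rcases h with ⟨p, h1, h2, h3, -, h4⟩ | ⟨p, h1, h2, h3, -, h4⟩ | ⟨h1, h2, h3, -, h5⟩
    · rcases h4 with ⟨h4, rfl⟩ | ⟨h4, rfl⟩
      · exact Or.inl ⟨p, h4, by rw [hμ, h1], h3, Or.inl ⟨h2, (hμ _ _).symm⟩⟩
      · exact Or.inr (Or.inl ⟨p, h4, h1, h3, Or.inl ⟨h2, rfl⟩⟩)
    · rcases h4 with ⟨h4, rfl⟩ | ⟨h4, rfl⟩
      · exact Or.inr (Or.inl ⟨p, h4, h1, h3, Or.inr ⟨h2, (hμ _ _).symm⟩⟩)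
      · exact Or.inl ⟨p, h4, h1, h3, Or.inr ⟨h2, rfl⟩⟩
    · subst h5
      exact Or.inr (Or.inr ⟨h2, fun p => by rw [hμ]; exact h1 p, h3, (hμ _ _).symm⟩)
  rcases key h with ⟨p, h1, h2, h3, h4⟩ | ⟨p, h1, h2, h3, h4⟩ | ⟨h1, h2, h3, h4⟩ <;>
  rcases key h' with ⟨p', h1', h2', h3', h4'⟩ | ⟨p', h1', h2', h3', h4'⟩ |
    ⟨h1', h2', h3', h4'⟩
  · have : p = p' := by rw [h2] at h2'; simpa [hc.eq_iff] using h2'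
    subst this
    cases hS _ _ _ _ h3 h3'
    refine ⟨?_, rfl⟩
    rcases h4 with ⟨h4, rfl⟩ | ⟨h4, rfl⟩ <;> rcases h4' with ⟨h4', rfl⟩ | ⟨h4', rfl⟩ <;>
      first | rfl | exact absurd h4 h4' | exact absurd h4' h4
  · exact absurd h1 h1'
  · exact absurd h2 (h2' p)
  · exact absurd h1' h1
  · have : p = p' := by rw [h2] at h2'; simpa [hc.eq_iff] using h2'
    subst this
    cases hS _ _ _ _ h3 h3'
    refine ⟨?_, rfl⟩
    rcases h4 with ⟨h4, rfl⟩ | ⟨h4, rfl⟩ <;> rcases h4' with ⟨h4', rfl⟩ | ⟨h4', rfl⟩ <;>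
      first | rfl | exact absurd h4 h4' | exact absurd h4' h4
  · exact absurd h2 (h1' p)
  · exact absurd h2' (h2 p')
  · exact absurd h2' (h1 p')
  · subst h3 h3' h4 h4'; exact ⟨rfl, rfl⟩

theorem CM.det {S : NoAccTrans (P × A) B} (hS : Deterministic S.toTwoWayAut)
    {m0 : V → Option V} {core : P → V} {p0 : P} (h0 : m0 (core p0) = none)
    {v s o v' s' o1 v1 s1} (h : CM S m0 core p0 v s o v' s')
    (h' : CM S m0 core p0 v s o1 v1 s1) : o = o1 ∧ v' = v1 ∧ s' = s1 := by
  rcases h with ⟨rfl, rfl, h1, rfl⟩ | ⟨h1, rfl, rfl⟩ <;>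
  rcases h' with ⟨h2, rfl, h1', rfl⟩ | ⟨h1', rfl, rfl⟩
  · cases hS _ _ _ _ h1 h1'; exact ⟨rfl, rfl, rfl⟩
  · rw [h0] at h1'; cases h1'
  · rw [h2, h0] at h1; cases h1
  · rw [h1] at h1'; cases h1'; exact ⟨rfl, rfl, rfl⟩

theorem CM.codet {S : NoAccTrans (P × A) B} (hS : Codeterministic S.toTwoWayAut)
    {m0 : V → Option V} (hm0 : ∀ v v', m0 v = some v' → m0 v' = some v)
    {core : P → V} {p0 : P} (h0 : m0 (core p0) = none)
    {v s o v' s' o1 v1 s1} (h : CM S m0 core p0 v s o v' s')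
    (h' : CM S m0 core p0 v1 s1 o1 v' s') : v = v1 ∧ s = s1 := by
  rcases h with ⟨rfl, rfl, h1, rfl⟩ | ⟨h1, rfl, rfl⟩ <;>
  rcases h' with ⟨rfl, h2, h1', rfl⟩ | ⟨h1', rfl, rfl⟩
  · cases hS _ _ _ _ h1 h1'; exact ⟨rfl, rfl⟩
  · rw [hm0 _ _ h1'] at h0; cases h0
  · rw [h2] at h1; rw [hm0 _ _ h1] at h0; cases h0
  · have := hm0 _ _ h1; rw [hm0 _ _ h1'] at this; cases this; exact ⟨rfl, rfl⟩

open Classical in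
/-- The composite transducer. -/
noncomputable def comp [Finite V] (S : NoAccTrans (P × A) B) (μ : A → Bool × V → Bool × V)
    (m0 : V → Option V) (core : P → V) (p0 : P) : NoAccTrans A B where
  Q := V × Bool × S.Q
  finQ := Fintype.ofFinite _
  fwd := fun q => q.2.1 = true
  init := (core p0, true, S.init)
  init_fwd := rfl
  Δ := {t | match t.2.1 with
    | some a => ∃ o, CT S μ core a (!t.1.2.1, t.1.1) t.1.2.2 o (t.2.2.2.1, t.2.2.1) t.2.2.2.2
    | none => t.1.2.1 = false ∧ t.2.2.2.1 = true ∧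
        ∃ o, CM S m0 core p0 t.1.1 t.1.2.2 o t.2.2.1 t.2.2.2.2}
  marker := by
    rintro p q ⟨h1, h2, -⟩
    simp only at h1 h2
    simp [h1, h2]
  out := fun t => match t.2.1 with
    | some a => if h : ∃ o, CT S μ core a (!t.1.2.1, t.1.1) t.1.2.2 o
        (t.2.2.2.1, t.2.2.1) t.2.2.2.2 then h.choose else []
    | none => if h : ∃ o, CM S m0 core p0 t.1.1 t.1.2.2 o t.2.2.1 t.2.2.2.2 then h.choose else []

variable [Finite V] {S : NoAccTrans (P × A) B} {μ : A → Bool × V → Bool × V}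
    {m0 : V → Option V} {core : P → V} {p0 : P}

theorem comp_mem {v d s a v' d' s'} :
    (((v, d, s), some a, (v', d', s')) : (V × Bool × S.Q) × Option A × (V × Bool × S.Q)) ∈
      (comp S μ m0 core p0).Δ ↔ ∃ o, CT S μ core a (!d, v) s o (d', v') s' := Iff.rfl

theorem comp_mem_none {v d s v' d' s'} :
    (((v, d, s), none, (v', d', s')) : (V × Bool × S.Q) × Option A × (V × Bool × S.Q)) ∈
      (comp S μ m0 core p0).Δ ↔
      d = false ∧ d' = true ∧ ∃ o, CM S m0 core p0 v s o v' s' := Iff.rfl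

open Classical in
theorem comp_out (hS : Deterministic S.toTwoWayAut) (hc : Function.Injective core)
    {v d s a v' d' s' o} (h : CT S μ core a (!d, v) s o (d', v') s') :
    (comp S μ m0 core p0).out ((v, d, s), some a, (v', d', s')) = o := by
  have h' : ∃ o, CT S μ core a (!d, v) s o (d', v') s' := ⟨o, h⟩
  change (if h : ∃ o, CT S μ core a (!d, v) s o (d', v') s' then h.choose else []) = o
  rw [dif_pos h']
  exact (h'.choose_spec.det hS hc h).1

open Classical in
theorem comp_out_none (hS : Deterministic S.toTwoWayAut) (h0 : m0 (core p0) = none)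
    {v d s v' d' s' o} (h : CM S m0 core p0 v s o v' s') :
    (comp S μ m0 core p0).out ((v, d, s), none, (v', d', s')) = o := by
  have h' : ∃ o, CM S m0 core p0 v s o v' s' := ⟨o, h⟩
  change (if h : ∃ o, CM S m0 core p0 v s o v' s' then h.choose else []) = o
  rw [dif_pos h']
  exact (h'.choose_spec.det hS h0 h).1

theorem comp_reversible (hS : Reversible S.toTwoWayAut) (hμ : ∀ a i, μ a (μ a i) = i)
    (hm0 : ∀ v v', m0 v = some v' → m0 v' = some v) (h0 : m0 (core p0) = none)
    (hc : Function.Injective core) : Reversible (comp S μ m0 core p0).toTwoWayAut := by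
  constructor
  · rintro ⟨v, d, s⟩ (_ | a) ⟨v', d', s'⟩ ⟨v1, d1, s1⟩ h h'
    · obtain ⟨rfl, rfl, o, h⟩ := comp_mem_none.1 h
      obtain ⟨-, rfl, o', h'⟩ := comp_mem_none.1 h'
      obtain ⟨-, rfl, rfl⟩ := h.det hS.1 h0 h'
      rfl
    · obtain ⟨o, h⟩ := comp_mem.1 h
      obtain ⟨o', h'⟩ := comp_mem.1 h'
      obtain ⟨-, h2, rfl⟩ := h.det hS.1 hc h'
      cases h2
      rfl
  · rintro ⟨v, d, s⟩ ⟨v1, d1, s1⟩ (_ | a) ⟨v', d', s'⟩ h h'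
    · obtain ⟨rfl, rfl, o, h⟩ := comp_mem_none.1 h
      obtain ⟨rfl, -, o', h'⟩ := comp_mem_none.1 h'
      obtain ⟨rfl, rfl⟩ := h.codet hS.2 hm0 h0 h'
      rfl
    · obtain ⟨o, h⟩ := comp_mem.1 h
      obtain ⟨o', h'⟩ := comp_mem.1 h'
      obtain ⟨h2, rfl⟩ := h.codet hS.2 hμ hc h'
      simp only [Prod.mk.injEq, Bool.not_inj_iff] at h2
      obtain ⟨rfl, rfl⟩ := h2
      rfl

/-- Steps of the walker. -/
inductive WStep (μ : A → Bool × V → Bool × V) (m0 : V → Option V) (w : ℕ → A) :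
    V × Bool × ℕ → V × Bool × ℕ → Prop
  | cell (j σ v σ' v') : μ (w j) (σ, v) = (σ', v') →
      WStep μ m0 w (v, !σ, j + σ.toNat) (v', σ', j + σ'.toNat)
  | mark (v v') : m0 v = some v' → WStep μ m0 w (v, false, 0) (v', true, 0)

def wrev (c : V × Bool × ℕ) : V × Bool × ℕ := (c.1, !c.2.1, c.2.2)

theorem wrev_wrev (c : V × Bool × ℕ) : wrev (wrev c) = c := by simp [wrev]

theorem WStep.symm (hμ : ∀ a i, μ a (μ a i) = i)
    (hm0 : ∀ v v', m0 v = some v' → m0 v' = some v) {w : ℕ → A} {c c'}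
    (h : WStep μ m0 w c c') : WStep μ m0 w (wrev c') (wrev c) := by
  cases h with
  | cell j σ v σ' v' h =>
    have := WStep.cell (μ := μ) (m0 := m0) (w := w) j σ' v' σ v (by rw [← h, hμ])
    simpa [wrev] using this
  | mark v v' h => exact WStep.mark v' v (hm0 _ _ h)

/-- Steps of the walker away from the gates. -/
def TS (μ : A → Bool × V → Bool × V) (m0 : V → Option V) (core : P → V) (w : ℕ → A)
    (c c' : V × Bool × ℕ) : Prop :=
  WStep μ m0 w c c' ∧ (∀ p, ¬ (c.1 = core p ∧ c.2.1 = true)) ∧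
    (∀ p, ¬ (c'.1 = core p ∧ c'.2.1 = false))

theorem TS.symm (hμ : ∀ a i, μ a (μ a i) = i)
    (hm0 : ∀ v v', m0 v = some v' → m0 v' = some v) {w : ℕ → A} {c c'}
    (h : TS μ m0 core w c c') : TS μ m0 core w (wrev c') (wrev c) := by
  refine ⟨h.1.symm hμ hm0, fun p hp => h.2.2 p ?_, fun p hp => h.2.1 p ?_⟩
  · simpa [wrev] using hp
  · simpa [wrev] using hp

theorem TS.star_symm (hμ : ∀ a i, μ a (μ a i) = i)
    (hm0 : ∀ v v', m0 v = some v' → m0 v' = some v) {w : ℕ → A} {c c'}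
    (h : Relation.ReflTransGen (TS μ m0 core w) c c') :
    Relation.ReflTransGen (TS μ m0 core w) (wrev c') (wrev c) := by
  induction h with
  | refl => exact Relation.ReflTransGen.refl
  | tail _ h ih => exact Relation.ReflTransGen.head (h.symm hμ hm0) ih

/-- Configurations of the composite transducer. -/
def ccfg (S : NoAccTrans (P × A) B) (c : V × Bool × ℕ) (s : S.Q) : (V × Bool × S.Q) × ℕ :=
  ((c.1, c.2.1, s), c.2.2)

theorem comp_cell (hS : Deterministic S.toTwoWayAut) (hc : Function.Injective core)
    {w : ℕ → A} {j σ v s o σ' v' s'} (h : CT S μ core (w j) (σ, v) s o (σ', v') s') :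
    CStep (comp S μ m0 core p0) w (ccfg S (v, !σ, j + σ.toNat) s) o
      (ccfg S (v', σ', j + σ'.toNat) s') := by
  have h' : CT S μ core (w j) (!!σ, v) s o (σ', v') s' := by simpa using h
  refine ⟨((v, !σ, s), some (w j), (v', σ', s')), ⟨comp_mem.2 ⟨o, h'⟩, rfl, rfl, ?_⟩,
    comp_out hS hc h'⟩
  cases σ <;> cases σ' <;> simp [comp, ccfg]

theorem comp_thru (hS : Deterministic S.toTwoWayAut) (hc : Function.Injective core)
    (h0 : m0 (core p0) = none) {w : ℕ → A} {c c'} (h : TS μ m0 core w c c') (s : S.Q) :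
    CStep (comp S μ m0 core p0) w (ccfg S c s) [] (ccfg S c' s) := by
  obtain ⟨h1, h2, h3⟩ := h
  cases h1 with
  | cell j σ v σ' v' h =>
    refine comp_cell hS hc (Or.inr (Or.inr ⟨fun p hp => h2 p ?_, fun p hp => h3 p ?_, rfl, rfl,
      h.symm⟩))
    · cases hp; exact ⟨rfl, rfl⟩
    · rw [h] at hp; cases hp; exact ⟨rfl, rfl⟩
  | mark v v' h =>
    have hm : CM S m0 core p0 v s [] v' s := Or.inr ⟨h, rfl, rfl⟩
    refine ⟨((v, false, s), none, (v', true, s)), ⟨comp_mem_none.2 ⟨rfl, rfl, _, hm⟩, rfl, rfl,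
      ?_⟩, comp_out_none hS h0 hm⟩
    simp [comp, ccfg]

theorem comp_thru_star (hS : Deterministic S.toTwoWayAut) (hc : Function.Injective core)
    (h0 : m0 (core p0) = none) {w : ℕ → A} {c c'}
    (h : Relation.ReflTransGen (TS μ m0 core w) c c') (s : S.Q) :
    ∃ k, Run (comp S μ m0 core p0) w k (ccfg S c s) [] (ccfg S c' s) := by
  induction h with
  | refl => exact ⟨0, Run.nil _⟩
  | tail _ h ih =>
    obtain ⟨k, hk⟩ := ih
    exact ⟨_, hk.trans (Run.single (comp_thru hS hc h0 h s))⟩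

/-- The walker visits the configurations `(core (p i), true, i)` successively, without meeting
other gates. -/
def Track (μ : A → Bool × V → Bool × V) (m0 : V → Option V) (core : P → V) (w : ℕ → A)
    (p : ℕ → P) : Prop :=
  ∀ i, ∃ c, WStep μ m0 w (core (p i), true, i) c ∧
    Relation.ReflTransGen (TS μ m0 core w) c (core (p (i + 1)), true, i + 1)

open Classical in
noncomputable def enc (S : NoAccTrans (P × A) B) (core : P → V) (p : ℕ → P) (c : S.Q × ℕ) :
    (V × Bool × S.Q) × ℕ :=
  ((core (p c.2), decide (S.fwd c.1), c.1), c.2)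

theorem comp_lift (hS : Deterministic S.toTwoWayAut) (hμ : ∀ a i, μ a (μ a i) = i)
    (hm0 : ∀ v v', m0 v = some v' → m0 v' = some v) (h0 : m0 (core p0) = none)
    (hc : Function.Injective core) {w : ℕ → A} {p : ℕ → P} (hp0 : p 0 = p0)
    (ht : Track μ m0 core w p) {c o c'} (h : CStep S (fun i => (p i, w i)) c o c') :
    ∃ k, 1 ≤ k ∧ Run (comp S μ m0 core p0) w k (enc S core p c) o (enc S core p c') := by
  obtain ⟨⟨s, x, s'⟩, ⟨h1, h2, h3, h4⟩, rfl⟩ := h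
  obtain ⟨s0, i⟩ := c
  obtain ⟨s1, i'⟩ := c'
  simp only at h2 h3 h4
  subst h2 h3
  have hcell : ∀ i, ∃ σ' v', μ (w i) (false, core (p i)) = (σ', v') ∧
      Relation.ReflTransGen (TS μ m0 core w) (v', σ', i + σ'.toNat)
        (core (p (i + 1)), true, i + 1) := by
    intro i
    obtain ⟨c, hc1, hc2⟩ := ht i
    generalize hx : (core (p i), true, i) = x at hc1
    cases hc1 with
    | cell j σ v σ' v' h =>
      simp only [Prod.mk.injEq] at hx
      obtain ⟨rfl, hx2, hx3⟩ := hx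
      have : σ = false := by simpa using hx2.symm
      subst this
      simp at hx3
      subst hx3
      exact ⟨σ', v', h, hc2⟩
    | mark v v' h => simp at hx
  rcases h4 with ⟨hf, rfl, h4⟩ | ⟨hf, hi, rfl, h4⟩ | ⟨hf, rfl, rfl, rfl⟩
  · have e1 : enc S core p (s, i) = ccfg S (core (p i), !false, i + false.toNat) s := by
      simp [enc, ccfg, hf]
    rcases h4 with ⟨hf', rfl⟩ | ⟨hf', rfl⟩
    · obtain ⟨σ', v', hm, hstar⟩ := hcell i
      have hct : CT S μ core (w i) (false, core (p i)) s (S.out (s, some (p i, w i), s'))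
          (σ', v') s' := Or.inl ⟨p i, rfl, hf, h1, rfl, Or.inl ⟨hf', hm.symm⟩⟩
      obtain ⟨k, hk⟩ := comp_thru_star hS hc h0 hstar s'
      have e2 : enc S core p (s', i + 1) = ccfg S (core (p (i + 1)), true, i + 1) s' := by
        simp [enc, ccfg, hf']
      rw [e1, e2]
      have := (Run.single (comp_cell (m0 := m0) (p0 := p0) hS hc hct)).trans hk
      rw [List.append_nil] at this
      exact ⟨_, by omega, this⟩
    · have hct : CT S μ core (w i') (false, core (p i')) s (S.out (s, some (p i', w i'), s'))
          (false, core (p i')) s' := Or.inl ⟨p i', rfl, hf, h1, rfl, Or.inr ⟨hf', rfl⟩⟩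
      have e2 : enc S core p (s', i') = ccfg S (core (p i'), false, i' + false.toNat) s' := by
        simp [enc, ccfg, hf']
      rw [e1, e2]
      exact ⟨1, le_rfl, Run.single (comp_cell (m0 := m0) (p0 := p0) hS hc hct)⟩
  · obtain ⟨i, rfl⟩ : ∃ j, i = j + 1 := ⟨i - 1, by omega⟩
    simp only [Nat.add_sub_cancel] at h1 h4 ⊢
    obtain ⟨σ', v', hm, hstar⟩ := hcell i
    have hm' : μ (w i) (σ', v') = (false, core (p i)) := by rw [← hm, hμ]
    have e1 : enc S core p (s, i + 1) = ccfg S (wrev (core (p (i + 1)), true, i + 1)) s := by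
      simp [enc, ccfg, hf, wrev]
    obtain ⟨k, hk⟩ := comp_thru_star hS hc h0 (TS.star_symm hμ hm0 hstar) s
    rw [e1]
    rcases h4 with ⟨hf', rfl⟩ | ⟨hf', rfl⟩
    · have hct : CT S μ core (w i) (σ', v') s (S.out (s, some (p i, w i), s'))
          (σ', v') s' := Or.inr (Or.inl ⟨p i, hm', hf, h1, rfl, Or.inr ⟨hf', rfl⟩⟩)
      obtain ⟨k2, hk2⟩ := comp_thru_star hS hc h0 hstar s'
      have e2 : enc S core p (s', i + 1) = ccfg S (core (p (i + 1)), true, i + 1) s' := by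
        simp [enc, ccfg, hf']
      rw [e2]
      have := hk.trans ((Run.single (comp_cell (m0 := m0) (p0 := p0) hS hc hct)).trans hk2)
      rw [List.append_nil, List.nil_append] at this
      exact ⟨_, by omega, this⟩
    · have hct : CT S μ core (w i') (σ', v') s (S.out (s, some (p i', w i'), s'))
          (false, core (p i')) s' :=
        Or.inr (Or.inl ⟨p i', hm', hf, h1, rfl, Or.inl ⟨hf', hm'.symm⟩⟩)
      have e2 : enc S core p (s', i') = ccfg S (core (p i'), false, i' + false.toNat) s' := by
        simp [enc, ccfg, hf']
      rw [e2]
      have := hk.trans (Run.single (comp_cell (m0 := m0) (p0 := p0) hS hc hct))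
      rw [List.nil_append] at this
      exact ⟨_, by omega, this⟩
  · have hf' := (S.marker _ _ h1).2
    have hm : CM S m0 core p0 (core p0) s (S.out (s, none, s')) (core p0) s' :=
      Or.inl ⟨rfl, rfl, h1, rfl⟩
    refine ⟨1, le_rfl, Run.single ⟨((core p0, false, s), none, (core p0, true, s')),
      ⟨comp_mem_none.2 ⟨rfl, rfl, _, hm⟩, ?_, ?_, ?_⟩, comp_out_none hS h0 hm⟩⟩
    · simp [enc, hf, hp0]; rfl
    · simp [enc, hf', hp0]; rfl
    · simp [enc, hf, comp]

theorem comp_lift_run (hS : Deterministic S.toTwoWayAut) (hμ : ∀ a i, μ a (μ a i) = i)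
    (hm0 : ∀ v v', m0 v = some v' → m0 v' = some v) (h0 : m0 (core p0) = none)
    (hc : Function.Injective core) {w : ℕ → A} {p : ℕ → P} (hp0 : p 0 = p0)
    (ht : Track μ m0 core w p) {k c o c'} (h : Run S (fun i => (p i, w i)) k c o c') :
    ∃ l, k ≤ l ∧ Run (comp S μ m0 core p0) w l (enc S core p c) o (enc S core p c') := by
  induction h with
  | nil c => exact ⟨0, le_rfl, Run.nil _⟩
  | cons h _ ih =>
    obtain ⟨l, hl, hr⟩ := ih
    obtain ⟨m, hm, hr'⟩ := comp_lift hS hμ hm0 h0 hc hp0 ht h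
    exact ⟨_, by omega, hr'.trans hr⟩

theorem comp_stuck (hc : Function.Injective core) {w : ℕ → A} {p : ℕ → P} {s : S.Q} {i : ℕ}
    (hf : S.fwd s) (h : ∀ o c, ¬ CStep S (fun i => (p i, w i)) (s, i) o c) :
    ∀ o c, ¬ CStep (comp S μ m0 core p0) w (enc S core p (s, i)) o c := by
  classical
  rintro o ⟨⟨v', d', s'⟩, i'⟩ ⟨⟨⟨v, d, s0⟩, x, q'⟩, ⟨h1, h2, h3, h4⟩, rfl⟩
  simp only [enc] at h2 h3 h4
  cases h2
  subst h3
  have hd : decide (S.fwd s) = true := by simpa using hf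
  rcases h4 with ⟨-, rfl, -⟩ | ⟨h4, -⟩ | ⟨h4, -⟩
  · obtain ⟨o, h1⟩ := comp_mem.1 h1
    rcases h1 with ⟨p', h1, -, h5, -⟩ | ⟨p', -, h1, -⟩ | ⟨h1, -⟩
    · simp only [Prod.mk.injEq, hc.eq_iff] at h1
      obtain ⟨-, rfl⟩ := h1
      by_cases hs' : S.fwd s'
      · exact h _ (s', i + 1) ⟨_, ⟨h5, rfl, rfl, Or.inl ⟨hf, rfl, Or.inl ⟨hs', rfl⟩⟩⟩, rfl⟩
      · exact h _ (s', i) ⟨_, ⟨h5, rfl, rfl, Or.inl ⟨hf, rfl, Or.inr ⟨hs', rfl⟩⟩⟩, rfl⟩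
    · exact h1 hf
    · exact h1 (p i) (by simp [hf])
  · exact h4 hd
  · exact h4 hd

end Composite

end Paper

namespace Paper

/-! ## The climbing walker -/

section Climb
variable {A P : Type} [LinearOrder P]

/-- The order of `P` or its reverse. -/
def blt (b : Bool) (p q : P) : Prop := if b then p < q else q < p

theorem blt_irrefl (b : Bool) (p : P) : ¬ blt b p p := by cases b <;> simp [blt]
theorem blt_trans {b : Bool} {p q r : P} (h : blt b p q) (h' : blt b q r) : blt b p r := by
  cases b
  · simp only [blt] at *; exact lt_trans h' h
  · simp only [blt] at *; exact lt_trans h h'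
theorem blt_not {b : Bool} {p q : P} : blt (!b) p q ↔ blt b q p := by cases b <;> simp [blt]
theorem blt_tri (b : Bool) (p q : P) : blt b p q ∨ p = q ∨ blt b q p := by
  rcases lt_trichotomy p q with h | h | h <;> cases b <;> simp [blt, h]
theorem blt_asymm {b : Bool} {p q : P} (h : blt b p q) : ¬ blt b q p :=
  fun h' => blt_irrefl b p (blt_trans h h')

theorem blt_eq_not {b β : Bool} {p q : P} (h : blt b p q) (h' : blt β q p) : β = !b := by
  rcases Bool.eq_or_eq_not β b with rfl | h1
  · exact absurd h' (blt_asymm h)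
  · exact h1

theorem blt_wf [Finite P] (b : Bool) : WellFounded (blt b : P → P → Prop) := by
  haveI : IsTrans P (blt b) := ⟨fun _ _ _ => blt_trans⟩
  haveI : Std.Irrefl (blt b : P → P → Prop) := ⟨blt_irrefl b⟩
  exact Finite.wellFounded_of_trans_of_irrefl _

/-- Moves of a single token inside a letter. -/
inductive Mv (δ : P → A → P) (a : A) : Bool × P × Bool → Bool × P × Bool → Prop
  | sib (p p' : P) (b : Bool) (h : δ p a = δ p' a) (hl : blt b p p')
      (hz : ∀ z, δ z a = δ p a → ¬ (blt b p z ∧ blt b z p')) :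
      Mv δ a (false, p, b) (false, p', !b)
  | up (p q : P) (b : Bool) (h : δ p a = q) (hz : ∀ z, δ z a = q → ¬ blt b p z) :
      Mv δ a (false, p, b) (true, q, b)
  | down (p q : P) (b : Bool) (h : δ p a = q) (hz : ∀ z, δ z a = q → ¬ blt b p z) :
      Mv δ a (true, q, b) (false, p, b)
  | leaf (q : P) (b : Bool) (hz : ∀ z, δ z a ≠ q) : Mv δ a (true, q, b) (true, q, !b)

variable {δ : P → A → P} {a : A}

theorem Mv.symm {c c'} (h : Mv δ a c c') : Mv δ a c' c := by
  cases h with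
  | sib p p' b h hl hz =>
    have := Mv.sib (δ := δ) (a := a) p' p (!b) h.symm (blt_not.2 hl) (fun z h1 h2 =>
      hz z (h1.trans h.symm) ⟨blt_not.1 h2.2, blt_not.1 h2.1⟩)
    simpa using this
  | up p q b h hz => exact Mv.down p q b h hz
  | down p q b h hz => exact Mv.up p q b h hz
  | leaf q b hz =>
    have := Mv.leaf (δ := δ) (a := a) q (!b) hz
    simpa using this

theorem Mv.fun {c c' c''} (h : Mv δ a c c') (h' : Mv δ a c c'') : c' = c'' := by
  cases h with
  | sib p p' b h hl hz =>
    cases h' with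
    | sib _ p'' _ h1 hl1 hz1 =>
      rcases blt_tri b p' p'' with h2 | rfl | h2
      · exact absurd ⟨hl, h2⟩ (hz1 p' h.symm)
      · rfl
      · exact absurd ⟨hl1, h2⟩ (hz p'' h1.symm)
    | up _ q _ h1 hz1 => exact absurd hl (hz1 p' (h.symm.trans h1))
  | up p q b h hz =>
    cases h' with
    | sib _ p'' _ h1 hl1 hz1 => exact absurd hl1 (hz p'' (h1.symm.trans h))
    | up _ q1 _ h1 hz1 => rw [← h, ← h1]
  | down p q b h hz =>
    cases h' with
    | down p1 _ _ h1 hz1 =>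
      rcases blt_tri b p p1 with h2 | rfl | h2
      · exact absurd h2 (hz p1 h1)
      · rfl
      · exact absurd h2 (hz1 p h)
    | leaf _ _ hz1 => exact absurd h (hz1 p)
  | leaf q b hz =>
    cases h' with
    | down p1 _ _ h1 hz1 => exact absurd h1 (hz p1)
    | leaf _ _ hz1 => rfl

theorem Mv.ne {c c'} (h : Mv δ a c c') : c ≠ c' := by
  cases h <;> simp

theorem Mv.total [Finite P] (c : Bool × P × Bool) : ∃ c', Mv δ a c c' := by
  obtain ⟨σ, p, b⟩ := c
  cases σ
  · by_cases h : ∃ z, δ z a = δ p a ∧ blt b p z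
    · obtain ⟨z, ⟨h1, h2⟩, h3⟩ := (blt_wf b).has_min {z | δ z a = δ p a ∧ blt b p z} h
      exact ⟨_, Mv.sib p z b h1.symm h2 (fun y hy h => h3 y ⟨hy, h.1⟩ h.2)⟩
    · push Not at h
      exact ⟨_, Mv.up p _ b rfl h⟩
  · by_cases h : ∃ z, δ z a = p
    · obtain ⟨z, h1, h3⟩ := (blt_wf (!b)).has_min {z | δ z a = p} h
      exact ⟨_, Mv.down z _ b h1 (fun y hy h => h3 y hy (blt_not.2 h))⟩
    · push Not at h
      exact ⟨_, Mv.leaf p b h⟩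

/-- The involution given by the token moves. -/
noncomputable def mv [Finite P] (δ : P → A → P) (a : A) (c : Bool × P × Bool) :
    Bool × P × Bool := (Mv.total (δ := δ) (a := a) c).choose

theorem mv_spec [Finite P] (c : Bool × P × Bool) : Mv δ a c (mv δ a c) :=
  (Mv.total (δ := δ) (a := a) c).choose_spec

theorem mv_mv [Finite P] (c : Bool × P × Bool) : mv δ a (mv δ a c) = c :=
  (mv_spec (mv δ a c)).fun (mv_spec c).symm

theorem mv_ne [Finite P] (c : Bool × P × Bool) : mv δ a c ≠ c := (mv_spec c).ne.symm

/-- Pairs of tokens. -/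
abbrev VV (P : Type) := (P × Bool) × (P × Bool)

/-- Moves of a pair of tokens inside a letter. -/
noncomputable def mup [Finite P] (δ : P → A → P) (a : A) (i : Bool × VV P) : Bool × VV P :=
  if (mv δ a (i.1, i.2.2)).1 = i.1 then (i.1, (i.2.1, (mv δ a (i.1, i.2.2)).2))
  else if (mv δ a (i.1, i.2.1)).1 = i.1 then (i.1, ((mv δ a (i.1, i.2.1)).2, i.2.2))
  else (!i.1, ((mv δ a (i.1, i.2.1)).2, (mv δ a (i.1, i.2.2)).2))

theorem mup_mup [Finite P] (i : Bool × VV P) : mup δ a (mup δ a i) = i := by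
  obtain ⟨d, x, y⟩ := i
  have hx := mv_mv (δ := δ) (a := a) (d, x)
  have hy := mv_mv (δ := δ) (a := a) (d, y)
  rcases ex : mv δ a (d, x) with ⟨dx, x'⟩
  rcases ey : mv δ a (d, y) with ⟨dy, y'⟩
  rw [ex] at hx
  rw [ey] at hy
  by_cases h1 : dy = d
  · subst h1
    simp [mup, ey, hy]
  · by_cases h2 : dx = d
    · subst h2
      simp [mup, ey, ex, hx, h1]
    · have h1' : dy = !d := by cases d <;> cases dy <;> simp_all
      have h2' : dx = !d := by cases d <;> cases dx <;> simp_all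
      subst h1' h2'
      simp [mup, ey, ex, hx, hy]

theorem mup_ne [Finite P] (i : Bool × VV P) : mup δ a i ≠ i := by
  obtain ⟨d, x, y⟩ := i
  have hx := mv_ne (δ := δ) (a := a) (d, x)
  have hy := mv_ne (δ := δ) (a := a) (d, y)
  rcases ex : mv δ a (d, x) with ⟨dx, x'⟩
  rcases ey : mv δ a (d, y) with ⟨dy, y'⟩
  rw [ex] at hx
  rw [ey] at hy
  by_cases h1 : dy = d
  · subst h1
    simp_all [mup]
  · by_cases h2 : dx = d
    · subst h2
      simp_all [mup]
    · simp_all [mup]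

/-- Moves of a pair of tokens on the end-marker. -/
def mz (p0 : P) (v : VV P) : Option (VV P) :=
  if v.2.1 ≠ p0 then some (v.1, (v.2.1, !v.2.2))
  else if v.1.1 ≠ p0 then some ((v.1.1, !v.1.2), v.2) else none

theorem mz_symm (p0 : P) (v v' : VV P) (h : mz p0 v = some v') : mz p0 v' = some v := by
  obtain ⟨⟨x, s⟩, ⟨y, r⟩⟩ := v
  by_cases h1 : y = p0
  · by_cases h2 : x = p0
    · simp [mz, h1, h2] at h
    · simp [mz, h1, h2] at h
      subst h
      simp [mz, h1, h2]
  · simp [mz, h1] at h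
    subst h
    simp [mz, h1]

theorem mz_ne (p0 : P) (v v' : VV P) (h : mz p0 v = some v') : v ≠ v' := by
  obtain ⟨⟨x, s⟩, ⟨y, r⟩⟩ := v
  by_cases h1 : y = p0
  · by_cases h2 : x = p0
    · simp [mz, h1, h2] at h
    · simp [mz, h1, h2] at h
      subst h
      simp
  · simp [mz, h1] at h
    subst h
    simp

/-- The pair of tokens around a single state. -/
def kor (p : P) : VV P := ((p, false), (p, true))

theorem kor_inj : Function.Injective (kor : P → VV P) := by
  intro p q h
  simpa [kor] using h

theorem mz_kor (p0 : P) : mz p0 (kor p0) = none := by simp [mz, kor]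

/-! ### Regions -/

/-- States on the side `b` of the main path at time `j` that merge with it by time `N`. -/
inductive SL (δ : P → A → P) (w : ℕ → A) (p : ℕ → P) (N : ℕ) (b : Bool) : P → ℕ → Prop
  | base (x j) (hj : j < N) (hl : blt b (p j) x) (h : δ x (w j) = p (j + 1)) : SL δ w p N b x j
  | step (x j) (h : SL δ w p N b (δ x (w j)) (j + 1)) : SL δ w p N b x j

variable {w : ℕ → A} {p : ℕ → P} {N : ℕ} {b : Bool}

theorem SL.lt {x j} (h : SL δ w p N b x j) : j < N := by
  induction h <;> omega

theorem SL.ne (hp : ∀ j, p (j + 1) = δ (p j) (w j)) {x j} (h : SL δ w p N b x j) : x ≠ p j := by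
  induction h with
  | base x j hj hl h => rintro rfl; exact blt_irrefl _ _ hl
  | step x j h ih => rintro rfl; exact ih (hp j).symm

theorem SL.disj (hp : ∀ j, p (j + 1) = δ (p j) (w j)) {x j} (h : SL δ w p N b x j)
    (h' : SL δ w p N (!b) x j) : False := by
  induction h with
  | base x j hj hl h =>
    cases h' with
    | base _ _ _ hl1 _ => exact blt_asymm hl (blt_not.1 hl1)
    | step _ _ h1 => exact h1.ne hp h
  | step x j h ih =>
    cases h' with
    | base _ _ _ hl1 h1 => exact h.ne hp h1
    | step _ _ h1 => exact ih h1

/-- The region accessible to the token of side `b`. -/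
def Reg (δ : P → A → P) (w : ℕ → A) (p : ℕ → P) (N : ℕ) (b : Bool) (j : ℕ) (x : P × Bool) : Prop :=
  (x.1 = p j ∧ x.2 = b ∧ j ≤ N) ∨ SL δ w p N b x.1 j

theorem Reg.mv (hp : ∀ j, p (j + 1) = δ (p j) (w j)) {j} (hj : j < N) {c c'}
    (h : Mv δ (w j) c c') (hr : Reg δ w p N b (j + c.1.toNat) c.2) :
    Reg δ w p N b (j + c'.1.toNat) c'.2 := by
  cases h with
  | sib x x' β h hl hz =>
    simp only [Bool.toNat_false, Nat.add_zero] at hr ⊢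
    rcases hr with ⟨h1, h2, h3⟩ | hr
    · simp only at h1 h2
      subst h1 h2
      exact Or.inr (SL.base _ _ hj hl (by rw [hp, h]))
    · cases hr with
      | base _ _ _ hl1 h1 =>
        simp only at hl1 h1
        rcases blt_tri b (p j) x' with h2 | h2 | h2
        · exact Or.inr (SL.base _ _ hj h2 (h.symm.trans h1))
        · subst h2
          have := blt_eq_not hl1 hl
          exact Or.inl ⟨rfl, by simp [this], hj.le⟩
        · have := blt_eq_not (blt_trans h2 hl1) hl
          subst this
          exact absurd ⟨blt_not.2 hl1, blt_not.2 h2⟩ (hz (p j) (by rw [← hp, h1]))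
      | step _ _ h1 =>
        refine Or.inr (SL.step _ _ ?_)
        simp only at h1 ⊢
        rwa [← h]
  | up x q β h hz =>
    subst h
    simp only [Bool.toNat_false, Bool.toNat_true, Nat.add_zero] at hr ⊢
    rcases hr with ⟨h1, h2, h3⟩ | hr
    · simp only at h1 h2
      subst h1 h2
      exact Or.inl ⟨(hp j).symm, rfl, hj⟩
    · cases hr with
      | base _ _ _ hl1 h1 =>
        simp only at hl1 h1
        refine Or.inl ⟨h1, ?_, hj⟩
        rcases Bool.eq_or_eq_not β b with h2 | rfl
        · exact h2
        · exact absurd (blt_not.2 hl1) (hz (p j) (by rw [← hp, h1]))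
      | step _ _ h1 => exact Or.inr h1
  | down x q β h hz =>
    subst h
    simp only [Bool.toNat_false, Bool.toNat_true, Nat.add_zero] at hr ⊢
    rcases hr with ⟨h1, h2, h3⟩ | hr
    · simp only at h1 h2
      subst h2
      rcases blt_tri β (p j) x with h2 | h2 | h2
      · exact Or.inr (SL.base _ _ hj h2 h1)
      · exact Or.inl ⟨h2.symm, rfl, hj.le⟩
      · exact absurd h2 (hz (p j) (by rw [← hp, h1]))
    · exact Or.inr (SL.step _ _ hr)
  | leaf q β hz =>
    simp only [Bool.toNat_true] at hr ⊢
    rcases hr with ⟨h1, h2, h3⟩ | hr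
    · exact absurd ((hp j).symm.trans h1.symm) (hz (p j))
    · exact Or.inr hr

/-- The region accessible to the pair of tokens. -/
def Regn (δ : P → A → P) (w : ℕ → A) (p : ℕ → P) (N : ℕ) (j : ℕ) (v : VV P) : Prop :=
  Reg δ w p N false j v.1 ∧ Reg δ w p N true j v.2

theorem Regn.kor (j : ℕ) (hj : j ≤ N) : Regn δ w p N j (kor (p j)) :=
  ⟨Or.inl ⟨rfl, rfl, hj⟩, Or.inl ⟨rfl, rfl, hj⟩⟩

theorem Regn.eq_kor (hp : ∀ j, p (j + 1) = δ (p j) (w j)) {j q} (h : Regn δ w p N j (Paper.kor q)) :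
    q = p j := by
  rcases h with ⟨⟨h, -, -⟩ | h, ⟨h', -, -⟩ | h'⟩
  · exact h
  · exact h
  · exact h'
  · exact absurd h' (fun h' => h.disj hp h')

theorem Regn.top {v} (h : Regn δ w p N N v) : v = Paper.kor (p N) := by
  obtain ⟨⟨x, s⟩, ⟨y, r⟩⟩ := v
  rcases h with ⟨⟨h1, h2, -⟩ | h, ⟨h3, h4, -⟩ | h'⟩
  · simp only at h1 h2 h3 h4
    subst h1 h2 h3 h4; rfl
  · exact absurd h'.lt (lt_irrefl _)
  · exact absurd h.lt (lt_irrefl _)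
  · exact absurd h.lt (lt_irrefl _)

theorem Regn.bot (hp : ∀ j, p (j + 1) = δ (p j) (w j)) {v} (h : Regn δ w p N 0 v)
    (h0 : mz (p 0) v = none) : v = Paper.kor (p 0) := by
  obtain ⟨⟨x, s⟩, ⟨y, r⟩⟩ := v
  have hy : y = p 0 := by by_contra hy; simp [mz, hy] at h0
  have hx : x = p 0 := by by_contra hx; simp [mz, hx, hy] at h0
  rcases h with ⟨⟨h1, h2, -⟩ | h, ⟨h3, h4, -⟩ | h'⟩
  · simp only at h1 h2 h3 h4
    subst h1 h2 h3 h4; rfl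
  · exact absurd hy (h'.ne hp)
  · exact absurd hx (h.ne hp)
  · exact absurd hx (h.ne hp)

theorem Regn.step [Finite P] (hp : ∀ j, p (j + 1) = δ (p j) (w j)) {c c'}
    (h : WStep (mup δ) (mz (p 0)) w c c') (hN : c.2.2 < N) (hr : Regn δ w p N c.2.2 c.1) :
    Regn δ w p N c'.2.2 c'.1 := by
  cases h with
  | cell j σ v σ' v' h =>
    obtain ⟨x, y⟩ := v
    simp only at hN hr ⊢
    have hj : j < N := by omega
    have h1 := Reg.mv hp hj (mv_spec (δ := δ) (a := w j) (σ, x)) hr.1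
    have h2 := Reg.mv hp hj (mv_spec (δ := δ) (a := w j) (σ, y)) hr.2
    rcases ex : mv δ (w j) (σ, x) with ⟨dx, x'⟩
    rcases ey : mv δ (w j) (σ, y) with ⟨dy, y'⟩
    rw [ex] at h1
    rw [ey] at h2
    simp only [mup, ex, ey] at h
    split_ifs at h with h3 h4
    · cases h; subst h3; exact ⟨hr.1, h2⟩
    · cases h; subst h4; exact ⟨h1, hr.2⟩
    · have h5 : dy = !σ := by cases σ <;> cases dy <;> simp_all
      have h6 : dx = !σ := by cases σ <;> cases dx <;> simp_all
      subst h5 h6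
      cases h
      exact ⟨h1, h2⟩
  | mark v v' h =>
    obtain ⟨⟨x, s⟩, ⟨y, r⟩⟩ := v
    simp only [mz] at h
    split_ifs at h with h3 h4
    · cases h
      refine ⟨hr.1, ?_⟩
      rcases hr.2 with h | h
      · exact absurd h.1 h3
      · exact Or.inr h
    · cases h
      refine ⟨?_, hr.2⟩
      rcases hr.1 with h | h
      · exact absurd h.1 h4
      · exact Or.inr h

end Climb

end Paper

namespace Paper

/-! ## The orbit of the walker -/

section Orbit
variable {A P : Type} [LinearOrder P] [Finite P]
variable {δ : P → A → P} {w : ℕ → A} {p : ℕ → P}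

theorem WStep.det {V : Type} {μ : A → Bool × V → Bool × V} {m0 : V → Option V} {c c' c''}
    (h : WStep μ m0 w c c') (h' : WStep μ m0 w c c'') : c' = c'' := by
  generalize hd : c = d at h'
  cases h with
  | cell j σ v σ' v' h =>
    cases h' with
    | cell j1 σ1 v1 σ1' v1' h1 =>
      simp only [Prod.mk.injEq] at hd
      obtain ⟨rfl, h2, h3⟩ := hd
      have h4 : σ = σ1 := by simpa using h2
      subst h4
      have h5 : j = j1 := by omega
      subst h5
      rw [h] at h1
      cases h1
      rfl
    | mark v1 v1' h1 =>
      simp only [Prod.mk.injEq] at hd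
      obtain ⟨rfl, h2, h3⟩ := hd
      have h4 : σ = true := by simpa using h2
      subst h4
      simp at h3
  | mark v v' h =>
    cases h' with
    | cell j1 σ1 v1 σ1' v1' h1 =>
      simp only [Prod.mk.injEq] at hd
      obtain ⟨rfl, h2, h3⟩ := hd
      have h4 : σ1 = true := by simpa using h2
      subst h4
      simp at h3
    | mark v1 v1' h1 =>
      cases hd
      rw [h] at h1
      cases h1
      rfl

theorem WStep.ex {V : Type} {μ : A → Bool × V → Bool × V} {m0 : V → Option V} (c : V × Bool × ℕ)
    (h : ¬ (c.2.1 = false ∧ c.2.2 = 0 ∧ m0 c.1 = none)) : ∃ c', WStep μ m0 w c c' := by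
  obtain ⟨v, d, j⟩ := c
  cases d
  · cases j with
    | zero =>
      rcases hm : m0 v with _ | v'
      · exact absurd ⟨rfl, rfl, hm⟩ h
      · exact ⟨_, WStep.mark v v' hm⟩
    | succ j => exact ⟨_, WStep.cell j true v _ _ rfl⟩
  · exact ⟨_, WStep.cell j false v _ _ rfl⟩

theorem WStep.not_bot {V : Type} {μ : A → Bool × V → Bool × V} {m0 : V → Option V} {v c'}
    (h0 : m0 v = none) (h : WStep μ m0 w (v, false, 0) c') : False := by
  generalize hd : (v, false, 0) = d at h
  cases h with
  | cell j1 σ1 v1 σ1' v1' h1 =>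
    simp only [Prod.mk.injEq] at hd
    obtain ⟨rfl, h2, h3⟩ := hd
    have h4 : σ1 = true := by simpa using h2
    subst h4
    simp at h3
  | mark v1 v1' h1 => cases hd; rw [h0] at h1; cases h1

open Classical in
/-- The orbit of the walker. -/
noncomputable def orb (δ : P → A → P) (w : ℕ → A) (p0 : P) : ℕ → VV P × Bool × ℕ
  | 0 => (kor p0, true, 0)
  | t + 1 => if h : ∃ c', WStep (mup δ) (mz p0) w (orb δ w p0 t) c' then h.choose
      else orb δ w p0 t

theorem orb_step {p0 : P} {t : ℕ} (h : ∃ c', WStep (mup δ) (mz p0) w (orb δ w p0 t) c') :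
    WStep (mup δ) (mz p0) w (orb δ w p0 t) (orb δ w p0 (t + 1)) := by
  rw [orb, dif_pos h]; exact h.choose_spec

theorem wstep_symm {p0 : P} {c c'} (h : WStep (mup δ) (mz p0) w c c') :
    WStep (mup δ) (mz p0) w (wrev c') (wrev c) :=
  WStep.symm (fun _ => mup_mup) (mz_symm p0) h

theorem wstep_ne {p0 : P} {c} : ¬ WStep (mup δ) (mz p0) w c (wrev c) := by
  intro h
  generalize hd : wrev c = d at h
  cases h with
  | cell j σ v σ' v' h =>
    simp only [wrev, Prod.mk.injEq, Bool.not_not] at hd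
    obtain ⟨rfl, rfl, -⟩ := hd
    exact mup_ne _ h
  | mark v v' h =>
    simp only [wrev, Prod.mk.injEq] at hd
    obtain ⟨rfl, -⟩ := hd
    exact mz_ne _ _ _ h rfl

theorem wrev_ne {V : Type} (c : V × Bool × ℕ) : c ≠ wrev c := by
  intro h
  have := congrArg (fun c => c.2.1) h
  simp [wrev] at this

theorem wrev_inv {V : Type} (c : V × Bool × ℕ) : wrev (wrev c) = c := by
  simp [wrev]

theorem orb_ne_rev {p0 : P} {t : ℕ}
    (h : ∀ s < t, WStep (mup δ) (mz p0) w (orb δ w p0 s) (orb δ w p0 (s + 1))) :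
    ∀ k i, i + k ≤ t → orb δ w p0 i ≠ wrev (orb δ w p0 (i + k)) := by
  intro k
  induction k using Nat.strong_induction_on with
  | _ k ih =>
    intro i hi he
    match k with
    | 0 => exact wrev_ne _ he
    | 1 =>
      have h1 := h i (by omega)
      have h2 : orb δ w p0 (i + 1) = wrev (orb δ w p0 i) := by rw [he, wrev_inv]
      rw [h2] at h1
      exact wstep_ne h1
    | k + 2 =>
      have h1 := h i (by omega)
      have h2 := wstep_symm (h (i + k + 1) (by omega))
      rw [show i + k + 1 + 1 = i + (k + 2) by omega, ← he] at h2
      have h3 := h1.det h2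
      rw [show i + k + 1 = i + 1 + k by omega] at h3
      exact ih k (by omega) (i + 1) (by omega) h3

theorem orb_ne {p0 : P} {t : ℕ}
    (h : ∀ s < t, WStep (mup δ) (mz p0) w (orb δ w p0 s) (orb δ w p0 (s + 1))) :
    ∀ i k, i + (k + 1) ≤ t → orb δ w p0 i ≠ orb δ w p0 (i + (k + 1)) := by
  intro i
  induction i with
  | zero =>
    intro k hk he
    have h1 := wstep_symm (h k (by omega))
    rw [show k + 1 = 0 + (k + 1) by omega, ← he] at h1
    exact WStep.not_bot (mz_kor p0) h1
  | succ i ih =>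
    intro k hk he
    have h1 := wstep_symm (h i (by omega))
    have h2 := wstep_symm (h (i + (k + 1)) (by omega))
    rw [show i + (k + 1) + 1 = i + 1 + (k + 1) by omega, ← he] at h2
    have h3 := congrArg wrev (h1.det h2)
    rw [wrev_inv, wrev_inv] at h3
    exact ih k (by omega) h3

theorem orb_reg (hp : ∀ j, p (j + 1) = δ (p j) (w j)) (N t : ℕ)
    (h : ∀ s < t, (orb δ w (p 0) s).2.2 < N) :
    Regn δ w p N (orb δ w (p 0) t).2.2 (orb δ w (p 0) t).1 ∧
    ∀ s ≤ t, WStep (mup δ) (mz (p 0)) w (orb δ w (p 0) s) (orb δ w (p 0) (s + 1)) := by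
  have key : ∀ t, Regn δ w p N (orb δ w (p 0) t).2.2 (orb δ w (p 0) t).1 →
      (∀ s < t, WStep (mup δ) (mz (p 0)) w (orb δ w (p 0) s) (orb δ w (p 0) (s + 1))) →
      ∀ s ≤ t, WStep (mup δ) (mz (p 0)) w (orb δ w (p 0) s) (orb δ w (p 0) (s + 1)) := by
    intro t hr hs s hst
    rcases hst.lt_or_eq with h1 | rfl
    · exact hs s h1
    refine orb_step (WStep.ex _ ?_)
    rintro ⟨h1, h2, h3⟩
    rw [h2] at hr
    have h4 := hr.bot hp h3
    refine orb_ne_rev hs s 0 (by omega) ?_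
    rw [Nat.zero_add]
    refine Prod.ext h4.symm (Prod.ext ?_ h2.symm)
    simp [wrev, h1, orb]
  induction t with
  | zero =>
    have : Regn δ w p N (orb δ w (p 0) 0).2.2 (orb δ w (p 0) 0).1 := Regn.kor 0 (Nat.zero_le _)
    exact ⟨this, key 0 this (by intro s hs; omega)⟩
  | succ t ih =>
    obtain ⟨h1, h2⟩ := ih (fun s hs => h s (by omega))
    have h3 := h1.step hp (h2 t le_rfl) (h t (by omega))
    exact ⟨h3, key _ h3 (fun s hs => h2 s (by omega))⟩

theorem orb_reach (hp : ∀ j, p (j + 1) = δ (p j) (w j)) (N : ℕ) :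
    ∃ t, N ≤ (orb δ w (p 0) t).2.2 := by
  by_contra hcon
  push Not at hcon
  have hs : ∀ s, WStep (mup δ) (mz (p 0)) w (orb δ w (p 0) s) (orb δ w (p 0) (s + 1)) :=
    fun s => (orb_reg hp N s (fun s _ => hcon s)).2 s le_rfl
  have hinj : Function.Injective
      (fun t => ((orb δ w (p 0) t).1, (orb δ w (p 0) t).2.1,
        (⟨(orb δ w (p 0) t).2.2, hcon t⟩ : Fin N))) := by
    have key : ∀ s t, s < t → orb δ w (p 0) s ≠ orb δ w (p 0) t := by
      intro s t hst
      obtain ⟨k, rfl⟩ : ∃ k, t = s + (k + 1) := ⟨t - s - 1, by omega⟩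
      exact orb_ne (fun s _ => hs s) s k le_rfl
    intro s t h
    have he : orb δ w (p 0) s = orb δ w (p 0) t := by
      simp only [Prod.mk.injEq, Fin.mk.injEq] at h
      exact Prod.ext h.1 (Prod.ext h.2.1 h.2.2)
    rcases lt_trichotomy s t with h1 | h1 | h1
    · exact absurd he (key _ _ h1)
    · exact h1
    · exact absurd he.symm (key _ _ h1)
  exact not_injective_infinite_finite _ hinj

theorem orb_hit (hp : ∀ j, p (j + 1) = δ (p j) (w j)) (N : ℕ) :
    ∃ t, orb δ w (p 0) t = (kor (p N), true, N) ∧ ∀ s < t, (orb δ w (p 0) s).2.2 < N := by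
  classical
  have hex := orb_reach hp N
  refine ⟨Nat.find hex, ?_, fun s hs => by simpa using Nat.find_min hex hs⟩
  have h1 := Nat.find_spec hex
  have h2 : ∀ s < Nat.find hex, (orb δ w (p 0) s).2.2 < N :=
    fun s hs => by simpa using Nat.find_min hex hs
  generalize Nat.find hex = t at h1 h2
  obtain ⟨h3, h4⟩ := orb_reg hp N t h2
  cases t with
  | zero =>
    have : N = 0 := by simpa [orb] using h1
    subst this
    rfl
  | succ t =>
    have h5 := h4 t (by omega)
    have h6 := h2 t (by omega)
    have h7 : (orb δ w (p 0) (t + 1)).2.2 = N ∧ (orb δ w (p 0) (t + 1)).2.1 = true := by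
      generalize orb δ w (p 0) t = c at h5 h6
      generalize orb δ w (p 0) (t + 1) = c' at h5 h1
      cases h5 with
      | cell j σ v σ' v' h =>
        cases σ <;> cases σ' <;> simp at h1 h6 ⊢ <;> omega
      | mark v v' h => simp at h1 h6; omega
    rw [h7.1] at h3
    exact Prod.ext h3.top (Prod.ext h7.2 h7.1)

theorem climb_track (hp : ∀ j, p (j + 1) = δ (p j) (w j)) :
    Track (mup δ) (mz (p 0)) kor w p := by
  choose T hT hlt using fun N => orb_hit (w := w) hp N
  have hmono : ∀ i j, i < j → T i < T j := by
    intro i j hij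
    by_contra hc
    rcases (not_lt.1 hc).lt_or_eq with h | h
    · have := hlt i _ h
      rw [hT j] at this
      simp at this
      omega
    · have := hT i
      rw [← h, hT j] at this
      simp at this
      omega
  intro i
  have hs : ∀ s < T (i + 1), WStep (mup δ) (mz (p 0)) w (orb δ w (p 0) s)
      (orb δ w (p 0) (s + 1)) :=
    fun s hs => (orb_reg hp (i + 1) _ (hlt (i + 1))).2 s hs.le
  have hi := hmono i (i + 1) (by omega)
  refine ⟨orb δ w (p 0) (T i + 1), ?_, ?_⟩
  · have := hs (T i) hi
    rwa [hT i] at this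
  have hnc : ∀ s, T i < s → s < T (i + 1) → ∀ q, (orb δ w (p 0) s).1 ≠ kor q := by
    intro s h1 h2 q hq
    have hr := (orb_reg hp (i + 1) s (fun r hr => hlt (i + 1) r (hr.trans h2))).1
    have hj := hlt (i + 1) s h2
    rw [hq] at hr
    have hq' := hr.eq_kor hp
    generalize hj' : (orb δ w (p 0) s).2.2 = j at *
    have hTj : T j < s := by
      rcases (Nat.lt_succ_iff.1 hj).lt_or_eq with h | rfl
      · exact (hmono j i h).trans h1
      · exact h1
    cases hd : (orb δ w (p 0) s).2.1 with
    | true =>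
      refine orb_ne hs (T j) (s - T j - 1) (by omega) ?_
      rw [show T j + (s - T j - 1 + 1) = s by omega, hT j]
      exact Prod.ext (by rw [hq, hq']) (Prod.ext hd.symm hj'.symm)
    | false =>
      refine orb_ne_rev hs (s - T j) (T j) (by omega) ?_
      rw [show T j + (s - T j) = s by omega, hT j]
      refine Prod.ext ?_ (Prod.ext ?_ ?_)
      · simp [wrev, hq, hq']
      · simp [wrev, hd]
      · simp [wrev, hj']
  have main : ∀ k, T i + 1 + k ≤ T (i + 1) →
      Relation.ReflTransGen (TS (mup δ) (mz (p 0)) kor w) (orb δ w (p 0) (T i + 1))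
        (orb δ w (p 0) (T i + 1 + k)) := by
    intro k
    induction k with
    | zero => intro _; exact .refl
    | succ k ih =>
      intro hk
      refine (ih (by omega)).tail ⟨hs _ (by omega), ?_, ?_⟩
      · rintro q ⟨h1, -⟩
        exact hnc _ (by omega) (by omega) q h1
      · rintro q ⟨h1, h2⟩
        rcases (show T i + 1 + (k + 1) ≤ T (i + 1) by omega).lt_or_eq with h3 | h3
        · exact hnc _ (by omega) h3 q h1
        · rw [h3, hT (i + 1)] at h2
          simp at h2
  have := main (T (i + 1) - T i - 1) (by omega)
  rw [show T i + 1 + (T (i + 1) - T i - 1) = T (i + 1) by omega, hT (i + 1)] at this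
  exact this

end Orbit

end Paper

namespace Paper

/-! ## Assembling the construction -/

section Final
variable {A B : Type}

theorem count_bound (n m x : ℕ) (hm : m + 1 ≤ n) (hx : x ≤ n) :
    (x * (n + 1) ^ (m * 2) * 2) * (x * (n + 1) ^ (m * 2) * 2) * (2 * (m * 2 * 2 + 1))
      ≤ 2592 * n ^ (4 * n + 1) := by
  have hn : 1 ≤ n := by omega
  have h3 : (n + 1) ^ n ≤ 3 * n ^ n := by
    have hn0 : (0 : ℝ) < n := by exact_mod_cast hn
    have h1 : (1 + 1 / (n : ℝ)) ^ n ≤ 3 := by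
      have h2 : (1 + 1 / (n : ℝ)) ≤ Real.exp (1 / n) := by
        rw [add_comm]; exact Real.add_one_le_exp _
      calc (1 + 1 / (n : ℝ)) ^ n ≤ Real.exp (1 / n) ^ n := by gcongr
        _ = Real.exp 1 := by
          rw [← Real.exp_nat_mul]; congr 1; field_simp
        _ ≤ 3 := Real.exp_one_lt_three.le
    have h2 : ((n : ℝ) + 1) ^ n ≤ 3 * (n : ℝ) ^ n := by
      calc ((n : ℝ) + 1) ^ n = (1 + 1 / (n : ℝ)) ^ n * (n : ℝ) ^ n := by
            rw [← mul_pow]; congr 1; field_simp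
        _ ≤ 3 * (n : ℝ) ^ n := by gcongr
    exact_mod_cast h2
  have h4 : (n + 1) ^ (4 * (n - 1)) * n ^ 4 ≤ 81 * n ^ (4 * n) := by
    calc (n + 1) ^ (4 * (n - 1)) * n ^ 4 ≤ (n + 1) ^ (4 * (n - 1)) * (n + 1) ^ 4 := by
          gcongr; omega
      _ = ((n + 1) ^ n) ^ 4 := by
          rw [← pow_add, ← pow_mul]; congr 1; omega
      _ ≤ (3 * n ^ n) ^ 4 := by gcongr
      _ = 81 * n ^ (4 * n) := by rw [mul_pow, ← pow_mul, mul_comm n 4]; norm_num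
  calc (x * (n + 1) ^ (m * 2) * 2) * (x * (n + 1) ^ (m * 2) * 2) * (2 * (m * 2 * 2 + 1))
      ≤ (n * (n + 1) ^ ((n - 1) * 2) * 2) * (n * (n + 1) ^ ((n - 1) * 2) * 2) *
        (2 * (4 * n)) := by
        have h5 : (n + 1) ^ (m * 2) ≤ (n + 1) ^ ((n - 1) * 2) :=
          Nat.pow_le_pow_right (by omega) (by omega)
        have h6 : m * 2 * 2 + 1 ≤ 4 * n := by omega
        gcongr
    _ = 32 * n ^ 3 * (n + 1) ^ (4 * (n - 1)) := by
        rw [show 4 * (n - 1) = (n - 1) * 2 + (n - 1) * 2 by omega, pow_add]; ring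
    _ ≤ 32 * n ^ 4 * (n + 1) ^ (4 * (n - 1)) := by
        gcongr <;> omega
    _ = 32 * ((n + 1) ^ (4 * (n - 1)) * n ^ 4) := by ring
    _ ≤ 32 * (81 * n ^ (4 * n)) := by gcongr
    _ = 2592 * n ^ (4 * n) := by ring
    _ ≤ 2592 * n ^ (4 * n + 1) := by gcongr <;> omega

/-- The reversible transducer. -/
noncomputable def fin (T : NoAccTrans A B) [LinearOrder (DSt T)] : NoAccTrans A B :=
  comp (ev T) (mup (dStep T)) (mz (dInit T)) kor (dInit T)

theorem fin_reversible (T : NoAccTrans A B) [LinearOrder (DSt T)] :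
    Reversible (fin T).toTwoWayAut :=
  comp_reversible (ev_reversible T) (fun _ => mup_mup) (mz_symm _) (mz_kor _) kor_inj

theorem fin_track (T : NoAccTrans A B) [LinearOrder (DSt T)] (w : ℕ → A) :
    Track (mup (dStep T)) (mz (dInit T)) kor w (dSeq T w) :=
  climb_track (p := dSeq T w) (δ := dStep T) (fun _ => rfl)

theorem fin_lift (T : NoAccTrans A B) [LinearOrder (DSt T)] (w : ℕ → A) {k c o c'}
    (h : Run (ev T) (om T w) k c o c') :
    ∃ l, k ≤ l ∧ Run (fin T) w l (enc (ev T) kor (dSeq T w) c) o (enc (ev T) kor (dSeq T w) c') :=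
  comp_lift_run (ev_reversible T).1 (fun _ => mup_mup) (mz_symm _) (mz_kor _) kor_inj
    (p := dSeq T w) rfl (fin_track T w) h

theorem ev_none_fwd (T : NoAccTrans A B) : (ev T).fwd (none : EvQ T) := by
  intro e; simp

theorem fin_init (T : NoAccTrans A B) [LinearOrder (DSt T)] (w : ℕ → A) :
    enc (ev T) kor (dSeq T w) ((none : EvQ T), 0) = ((fin T).init, 0) := by
  simp only [enc]
  refine Prod.ext (Prod.ext rfl (Prod.ext ?_ rfl)) rfl
  exact @decide_eq_true _ (Classical.propDecidable _) (ev_none_fwd T)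

theorem fin_realizes (T : NoAccTrans A B) [LinearOrder (DSt T)]
    (hT : Deterministic T.toTwoWayAut) (w : ℕ → A) (x : ℕ → B) :
    (fin T).Realizes w x ↔ T.Realizes w x := by
  classical
  by_cases hok : ∀ i, okD T (dSeq T w i) (w i)
  · rw [checkpoint_realizes (M := T) hT (w := w) (K := fun i => ((dSeq T w i).1.1, i)) (u := uu T w)
      rfl (fun i => main_run hT i (fun j _ => hok j)) (fun i => le_rfl) x]
    refine checkpoint_realizes (M := fin T) (fin_reversible T).1 (w := w)
      (K := fun i => enc (ev T) kor (dSeq T w) ((none : EvQ T), i)) (u := uu T w)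
      (fin_init T w) (fun i => ?_) (fun i => le_rfl) x
    obtain ⟨k, hk, hr⟩ := ev_main i (hok i)
    obtain ⟨l, hl, hr'⟩ := fin_lift T w hr
    exact ⟨l, hk.trans hl, hr'⟩
  · push Not at hok
    have hn := Nat.find_spec hok
    have hlt : ∀ j < Nat.find hok, okD T (dSeq T w j) (w j) :=
      fun j hj => by simpa using Nat.find_min hok hj
    generalize Nat.find hok = i at hn hlt
    have hrun : ∀ j ≤ i, ∃ k o, Run (fin T) w k ((fin T).init, 0) o
        (enc (ev T) kor (dSeq T w) ((none : EvQ T), j)) := by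
      intro j
      induction j with
      | zero => intro _; exact ⟨0, [], by rw [fin_init]; exact Run.nil _⟩
      | succ j ih =>
        intro hj
        obtain ⟨k, o, h1⟩ := ih (by omega)
        obtain ⟨k', hk, hr⟩ := ev_main j (hlt j (by omega))
        obtain ⟨l, hl, hr'⟩ := fin_lift T w hr
        exact ⟨_, _, h1.trans hr'⟩
    obtain ⟨k, o, hr⟩ := hrun i le_rfl
    have h1 : ¬ (fin T).Realizes w x :=
      stuck_not_realizes (fin_reversible T).1 hr
        (comp_stuck kor_inj (p := dSeq T w) (ev_none_fwd T) (ev_stuck hn)) x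
    exact iff_of_false h1 (not_ok_not_realizes hT hlt hn x)

theorem fin_card (T : NoAccTrans A B) [LinearOrder (DSt T)] :
    Fintype.card (fin T).Q ≤ 2592 * Fintype.card T.Q ^ (4 * Fintype.card T.Q + 1) := by
  classical
  have hsum : Nat.card (Lf T) + Nat.card (Xf T) = Fintype.card T.Q := by
    have h := Nat.card_congr (Equiv.sumCompl (fun q : T.Q => T.fwd q))
    rw [Nat.card_sum, Nat.card_eq_fintype_card (α := T.Q)] at h
    rw [← h, add_comm]
  have hx : 1 ≤ Nat.card (Xf T) := by
    have : Nonempty (Xf T) := ⟨⟨T.init, T.init_fwd⟩⟩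
    exact Nat.card_pos
  have hP : Nat.card (DSt T) = Nat.card (Xf T) * (Fintype.card T.Q + 1) ^ (Nat.card (Lf T) * 2) := by
    rw [Nat.card_prod, Nat.card_fun, Finite.card_option, Nat.card_sum, hsum, Nat.card_prod]
    simp
  have hQ : Fintype.card (fin T).Q = Nat.card (VV (DSt T) × Bool × EvQ T) := by
    rw [Fintype.card_eq_nat_card]; rfl
  rw [hQ]
  have hE : Nat.card (VV (DSt T) × Bool × EvQ T) =
      (Nat.card (DSt T) * 2) * (Nat.card (DSt T) * 2) * (2 * (Nat.card (Lf T) * 2 * 2 + 1)) := by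
    simp only [Nat.card_prod, Finite.card_option]
    simp
  rw [hE, hP]
  exact count_bound _ _ _ (by omega) (by omega)

end Final

end Paper

namespace Paper

/-- Every deterministic two-way transducer `T` with `n` states and no
acceptance condition is equivalent to a reversible two-way transducer `S` with no acceptance
condition and at most `C·n^(4n+1)` states, for some absolute constant `C`. -/
theorem noacc_dbt_to_rt :
    ∃ C : ℕ, ∀ (A B : Type) [Fintype A] [Fintype B] (T : NoAccTrans A B) (n : ℕ),
      Deterministic T.toTwoWayAut → Fintype.card T.Q = n →
      ∃ S : NoAccTrans A B,
        Reversible S.toTwoWayAut ∧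
        Fintype.card S.Q ≤ C * n ^ (4 * n + 1) ∧
        (∀ w x, S.Realizes w x ↔ T.Realizes w x) := by
  refine ⟨2592, ?_⟩
  intro A B _ _ T n hT hn
  subst hn
  letI : LinearOrder (DSt T) :=
    LinearOrder.lift' (Finite.equivFin (DSt T)) (Finite.equivFin (DSt T)).injective
  exact ⟨fin T, fin_reversible T, fin_card T, fin_realizes T hT⟩

end Paper
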